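/- arXiv:1507.05746 — 2 statements merged into one kernel-verified Lean document; each statement's English description precedes it below -/
import Mathlib

section
/- Assume λ₁ > μ₁c₁, λ₂ > μ₂c₂, and p₁p₂ < 1. Let x₁, x₂ be real numbers with 0 < x₁ < x₂ < 1, Δ₂(x₁) = Δ₂(x₂) = 0, and Δ₂(x) < 0 for all x ∈ (x₁,x₂). Let π be an invariant distribution of the random walk (m̄_c(t)). Then π(0,0) = (λ₁ + λ₂p₂ − (μ₁c₁ + μ₂c₂p₂)) / ((λ₁ + λ₂p₂)·φ_Y(1)), where φ_Y(1) = exp((1/π)·∫_{x₁}^{x₂} (μ₁c₁x² − λ₁)·Θ_Y(x)/(x·h₁(x,1)) dx) and Θ_Y(x) = arctan((1−p₁p₂)·√(−Δ₂(x)) / ((1−p₁p₂)·(μ₁c₁x² − (λ₁+λ₂+μ₁c₁+μ₂c₂)x + λ₁) − 2R_Y(x))). -/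
/-- Δ₂(x) = (μ₁c₁x² − (λ₁+λ₂+μ₁c₁+μ₂c₂)x + λ₁)² − 4μ₂c₂λ₂x² -/
noncomputable def Delta2 (la1 la2 mu1 mu2 c1 c2 : ℝ) (x : ℝ) : ℝ :=
  (mu1 * c1 * x ^ 2 - (la1 + la2 + mu1 * c1 + mu2 * c2) * x + la1) ^ 2
    - 4 * mu2 * c2 * la2 * x ^ 2

/-- R_Y(x) = p₁μ₁c₁(1−p₂)x² + (p₁p₂(μ₁c₁+μ₂c₂) − (1−p₂)(λ₂+λ₁p₁))x − p₂(λ₂+λ₁p₁) -/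
noncomputable def RY (la1 la2 mu1 mu2 c1 c2 p1 p2 : ℝ) (x : ℝ) : ℝ :=
  p1 * mu1 * c1 * (1 - p2) * x ^ 2
    + (p1 * p2 * (mu1 * c1 + mu2 * c2) - (1 - p2) * (la2 + la1 * p1)) * x
    - p2 * (la2 + la1 * p1)

/-- The kernel h₁(x,y) restricted to real arguments. -/
noncomputable def h1r (la1 la2 mu1 mu2 c1 c2 : ℝ) (x y : ℝ) : ℝ :=
  -(mu1 * c1) * x ^ 2 * y - mu2 * c2 * x * y ^ 2
    + (la1 + la2 + mu1 * c1 + mu2 * c2) * x * y - la1 * y - la2 * x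

/-- Θ_Y(x), the argument function appearing in the solution of the
Riemann–Hilbert problem. -/
noncomputable def ThetaY (la1 la2 mu1 mu2 c1 c2 p1 p2 : ℝ) (x : ℝ) : ℝ :=
  Real.arctan ((1 - p1 * p2) * Real.sqrt (-(Delta2 la1 la2 mu1 mu2 c1 c2 x))
    / ((1 - p1 * p2) * (mu1 * c1 * x ^ 2 - (la1 + la2 + mu1 * c1 + mu2 * c2) * x + la1)
        - 2 * RY la1 la2 mu1 mu2 c1 c2 p1 p2 x))

/-- φ_Y(1) = exp((1/π)·∫_{x₁}^{x₂} (μ₁c₁x² − λ₁)Θ_Y(x)/(x·h₁(x,1)) dx). -/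
noncomputable def phiY1 (la1 la2 mu1 mu2 c1 c2 p1 p2 x1 x2 : ℝ) : ℝ :=
  Real.exp ((1 / Real.pi) * ∫ x in x1..x2,
    (mu1 * c1 * x ^ 2 - la1) * ThetaY la1 la2 mu1 mu2 c1 c2 p1 p2 x
      / (x * h1r la1 la2 mu1 mu2 c1 c2 x 1))

/-- π is an invariant (stationary) probability distribution of the random walk (m̄_c(t)):
nonnegative, sums to 1, and satisfies the balance equations. -/
def IsInvariantDist (la1 la2 mu1 mu2 l1 l2 p1 p2 : ℝ) (π : ℕ × ℕ → ℝ) : Prop :=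
  (∀ m, 0 ≤ π m) ∧ (∑' m : ℕ × ℕ, π m = 1) ∧
  ∀ m1 m2 : ℕ,
    π (m1, m2) * (mu1 * l1 + mu2 * l2
        + (la1 + p2 * la2 * (if m2 = 0 then 1 else 0)) * (if 0 < m1 then 1 else 0)
        + (la2 + p1 * la1 * (if m1 = 0 then 1 else 0)) * (if 0 < m2 then 1 else 0))
    = mu1 * l1 * π (m1 - 1, m2) * (if 0 < m1 then 1 else 0)
      + mu2 * l2 * π (m1, m2 - 1) * (if 0 < m2 then 1 else 0)
      + (la1 + p2 * la2 * (if m2 = 0 then 1 else 0)) * π (m1 + 1, m2)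
      + (la2 + p1 * la1 * (if m1 = 0 then 1 else 0)) * π (m1, m2 + 1)

section KernelMethod

open Complex Metric Set Filter Topology

/-- The generating function of a family `π` indexed by `ℕ × ℕ`. -/
noncomputable def genFun (π : ℕ × ℕ → ℝ) (x y : ℂ) : ℂ :=
  ∑' k : ℕ × ℕ, (π k : ℂ) * x ^ k.1 * y ^ k.2

lemma norm_genFun_term_le {π : ℕ × ℕ → ℝ} (h0 : ∀ k, 0 ≤ π k) {x y : ℂ}
    (hx : ‖x‖ ≤ 1) (hy : ‖y‖ ≤ 1) (k : ℕ × ℕ) :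
    ‖(π k : ℂ) * x ^ k.1 * y ^ k.2‖ ≤ π k := by
  rw [norm_mul, norm_mul, norm_pow, norm_pow, Complex.norm_real, Real.norm_of_nonneg (h0 k)]
  have h1 : ‖x‖ ^ k.1 ≤ 1 := pow_le_one₀ (norm_nonneg _) hx
  have h2 : ‖y‖ ^ k.2 ≤ 1 := pow_le_one₀ (norm_nonneg _) hy
  calc π k * ‖x‖ ^ k.1 * ‖y‖ ^ k.2 ≤ π k * 1 * 1 := by
        gcongr
        · exact mul_nonneg (h0 k) zero_le_one
        · exact h0 k
    _ = π k := by ring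

lemma hasSum_genFun {π : ℕ × ℕ → ℝ} (h0 : ∀ k, 0 ≤ π k) (hs : Summable π) {x y : ℂ}
    (hx : ‖x‖ ≤ 1) (hy : ‖y‖ ≤ 1) :
    HasSum (fun k : ℕ × ℕ => (π k : ℂ) * x ^ k.1 * y ^ k.2) (genFun π x y) :=
  (Summable.of_norm_bounded hs (norm_genFun_term_le h0 hx hy)).hasSum

lemma continuousOn_genFun {π : ℕ × ℕ → ℝ} (h0 : ∀ k, 0 ≤ π k) (hs : Summable π) :
    ContinuousOn (fun z : ℂ × ℂ => genFun π z.1 z.2) {z | ‖z.1‖ ≤ 1 ∧ ‖z.2‖ ≤ 1} :=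
  continuousOn_tsum (fun _ => by fun_prop) hs
    (fun k _ hz => norm_genFun_term_le h0 hz.1 hz.2 k)

lemma differentiableOn_genFun_left {π : ℕ × ℕ → ℝ} (h0 : ∀ k, 0 ≤ π k) (hs : Summable π)
    {y : ℂ} (hy : ‖y‖ ≤ 1) :
    DifferentiableOn ℂ (fun x => genFun π x y) (Metric.ball 0 1) :=
  Complex.differentiableOn_tsum_of_summable_norm hs (fun _ => by fun_prop) Metric.isOpen_ball
    (fun k _ hx => norm_genFun_term_le h0 (by simpa using (mem_ball_zero_iff.1 hx).le) hy k)

lemma differentiableOn_genFun_right {π : ℕ × ℕ → ℝ} (h0 : ∀ k, 0 ≤ π k) (hs : Summable π)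
    {x : ℂ} (hx : ‖x‖ ≤ 1) :
    DifferentiableOn ℂ (fun y => genFun π x y) (Metric.ball 0 1) :=
  Complex.differentiableOn_tsum_of_summable_norm hs (fun _ => by fun_prop) Metric.isOpen_ball
    (fun k _ hy => norm_genFun_term_le h0 hx (by simpa using (mem_ball_zero_iff.1 hy).le) k)

lemma genFun_zero_zero (π : ℕ × ℕ → ℝ) : genFun π 0 0 = π (0, 0) := by
  unfold genFun
  rw [tsum_eq_single (0, 0)]
  · simp
  · rintro ⟨i, j⟩ h
    rcases i with _ | i
    · rcases j with _ | j
      · exact absurd rfl h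
      · simp
    · simp

lemma genFun_one_one (π : ℕ × ℕ → ℝ) : genFun π 1 1 = (∑' k, π k : ℝ) := by
  simp [genFun, Complex.ofReal_tsum]

lemma hasSum_shift_right_fst {g : ℕ × ℕ → ℂ} {S : ℂ} (h : HasSum g S) :
    HasSum (fun k : ℕ × ℕ => if 0 < k.1 then g (k.1 - 1, k.2) else 0) S := by
  have hi : Function.Injective (fun k : ℕ × ℕ => (k.1 + 1, k.2)) := by
    rintro ⟨i, j⟩ ⟨i', j'⟩ h; simpa using h
  refine (hi.hasSum_iff ?_).1 (by simpa [Function.comp_def] using h)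
  rintro ⟨i, j⟩ hk
  rcases i with _ | i
  · simp
  · exact absurd ⟨(i, j), rfl⟩ hk

lemma hasSum_shift_right_snd {g : ℕ × ℕ → ℂ} {S : ℂ} (h : HasSum g S) :
    HasSum (fun k : ℕ × ℕ => if 0 < k.2 then g (k.1, k.2 - 1) else 0) S := by
  have hi : Function.Injective (fun k : ℕ × ℕ => (k.1, k.2 + 1)) := by
    rintro ⟨i, j⟩ ⟨i', j'⟩ h; simpa using h
  refine (hi.hasSum_iff ?_).1 (by simpa [Function.comp_def] using h)
  rintro ⟨i, j⟩ hk
  rcases j with _ | j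
  · simp
  · exact absurd ⟨(i, j), rfl⟩ hk

lemma hasSum_shift_left_fst {π : ℕ × ℕ → ℝ} (h0 : ∀ k, 0 ≤ π k) (hs : Summable π) {x y : ℂ}
    (hx : ‖x‖ ≤ 1) (hy : ‖y‖ ≤ 1) :
    HasSum (fun k : ℕ × ℕ => (π (k.1 + 1, k.2) : ℂ) * x ^ (k.1 + 1) * y ^ k.2)
      (genFun π x y - genFun π 0 y) := by
  have hi : Function.Injective (fun k : ℕ × ℕ => (k.1 + 1, k.2)) := by
    rintro ⟨i, j⟩ ⟨i', j'⟩ h; simpa using h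
  have h := (hasSum_genFun h0 hs hx hy).sub
    (hasSum_genFun h0 hs (x := 0) (y := y) (by simp) hy)
  have h' := (hi.hasSum_iff ?_).2 h
  · simpa [Function.comp_def] using h'
  · rintro ⟨i, j⟩ hk
    rcases i with _ | i
    · simp
    · exact absurd ⟨(i, j), rfl⟩ hk

lemma hasSum_shift_left_snd {π : ℕ × ℕ → ℝ} (h0 : ∀ k, 0 ≤ π k) (hs : Summable π) {x y : ℂ}
    (hx : ‖x‖ ≤ 1) (hy : ‖y‖ ≤ 1) :
    HasSum (fun k : ℕ × ℕ => (π (k.1, k.2 + 1) : ℂ) * x ^ k.1 * y ^ (k.2 + 1))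
      (genFun π x y - genFun π x 0) := by
  have hi : Function.Injective (fun k : ℕ × ℕ => (k.1, k.2 + 1)) := by
    rintro ⟨i, j⟩ ⟨i', j'⟩ h; simpa using h
  have h := (hasSum_genFun h0 hs hx hy).sub
    (hasSum_genFun h0 hs (x := x) (y := 0) hx (by simp))
  have h' := (hi.hasSum_iff ?_).2 h
  · simpa [Function.comp_def] using h'
  · rintro ⟨i, j⟩ hk
    rcases j with _ | j
    · simp
    · exact absurd ⟨(i, j), rfl⟩ hk

/-- The functional equation of the generating function of an invariant distribution. -/
lemma genFun_functional_equation {l m a b p1 p2 : ℝ} {π : ℕ × ℕ → ℝ} (h0 : ∀ k, 0 ≤ π k)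
    (hs : Summable π)
    (hbal : ∀ m1 m2 : ℕ,
      π (m1, m2) * (a + b
        + (l + p2 * m * (if m2 = 0 then 1 else 0)) * (if 0 < m1 then 1 else 0)
        + (m + p1 * l * (if m1 = 0 then 1 else 0)) * (if 0 < m2 then 1 else 0))
      = a * π (m1 - 1, m2) * (if 0 < m1 then 1 else 0)
        + b * π (m1, m2 - 1) * (if 0 < m2 then 1 else 0)
        + (l + p2 * m * (if m2 = 0 then 1 else 0)) * π (m1 + 1, m2)
        + (m + p1 * l * (if m1 = 0 then 1 else 0)) * π (m1, m2 + 1))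
    {x y : ℂ} (hx : ‖x‖ ≤ 1) (hy : ‖y‖ ≤ 1) :
    (-a * x ^ 2 * y - b * x * y ^ 2 + (l + m + a + b) * x * y - l * y - m * x) * genFun π x y
      = (l * y * (x - 1) - p1 * l * x * (y - 1)) * genFun π 0 y
        + (m * x * (y - 1) - p2 * m * y * (x - 1)) * genFun π x 0
        + (p2 * m * y * (x - 1) + p1 * l * x * (y - 1)) * genFun π 0 0 := by
  have z : ‖(0 : ℂ)‖ ≤ 1 := by simp
  have hF := hasSum_genFun h0 hs hx hy
  have hG := hasSum_genFun h0 hs z hy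
  have hH := hasSum_genFun h0 hs hx z
  have h00 := hasSum_genFun h0 hs z z
  have hL := ((((hF.mul_left ((a + b : ℝ) : ℂ)).add ((hF.sub hG).mul_left (l : ℂ))).add
    ((hH.sub h00).mul_left ((p2 * m : ℝ) : ℂ))).add ((hF.sub hH).mul_left (m : ℂ))).add
    ((hG.sub h00).mul_left ((p1 * l : ℝ) : ℂ))
  have hL' := hL.mul_left (x * y)
  have hR := ((((hasSum_shift_right_fst hF).mul_left (a * x ^ 2 * y)).add
    ((hasSum_shift_right_snd hF).mul_left (b * x * y ^ 2))).add
    (((hasSum_shift_left_fst h0 hs hx hy).mul_left (l * y)).add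
      ((hasSum_shift_left_fst h0 hs hx z).mul_left (p2 * m * y)))).add
    (((hasSum_shift_left_snd h0 hs hx hy).mul_left (m * x)).add
      ((hasSum_shift_left_snd h0 hs z hy).mul_left (p1 * l * x)))
  have key := hL'.unique (hR.congr_fun ?_)
  · push_cast at key
    linear_combination key
  · rintro ⟨i, j⟩
    have hb := congrArg (fun t : ℝ => (t : ℂ)) (hbal i j)
    push_cast at hb
    rcases i with _ | i <;> rcases j with _ | j <;>
      simp [pow_succ] at hb ⊢
    · linear_combination (x * y) * hb
    · linear_combination (x * y * y ^ j * y) * hb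
    · linear_combination (x * y * x ^ i * x) * hb
    · linear_combination (x * y * y ^ j * y * x ^ i * x) * hb

/-- The sum of the distances from `w` to the points `±2√(al)`. -/
noncomputable def focalSum (a l : ℝ) (w : ℂ) : ℝ :=
  ‖w - (2 * √(a * l) : ℝ)‖ + ‖w + (2 * √(a * l) : ℝ)‖

/-- The root of smaller modulus of `a x² - w x + l`. -/
noncomputable def smallRoot (a l : ℝ) (w : ℂ) : ℂ :=
  w * (1 - (1 - 4 * a * l / w ^ 2) ^ (1 / 2 : ℂ)) / (2 * a)

lemma continuous_focalSum (a l : ℝ) : Continuous (focalSum a l) := by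
  unfold focalSum; fun_prop

lemma two_mul_norm_le_focalSum (a l : ℝ) (w : ℂ) : 2 * ‖w‖ ≤ focalSum a l w := by
  have := norm_add_le (w - (2 * √(a * l) : ℝ)) (w + (2 * √(a * l) : ℝ))
  rw [show w - (2 * √(a * l) : ℝ) + (w + (2 * √(a * l) : ℝ)) = 2 * w by ring, norm_mul] at this
  simpa [focalSum] using this

lemma focalSum_of_real {a l d : ℝ} (hd : |d| ≤ 2 * √(a * l)) :
    focalSum a l d = 2 * (2 * √(a * l)) := by
  unfold focalSum
  rw [← Complex.ofReal_sub, ← Complex.ofReal_add, Complex.norm_real, Complex.norm_real,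
    Real.norm_eq_abs, Real.norm_eq_abs]
  have := abs_le.1 hd
  rw [abs_of_nonpos (by linarith), abs_of_nonneg (by linarith)]
  ring

lemma focalSum_of_re_le {a l : ℝ} {w : ℂ} (h : 2 * √(a * l) < w.re) :
    2 * (2 * √(a * l)) < focalSum a l w := by
  have := two_mul_norm_le_focalSum a l w
  have := Complex.re_le_norm w
  linarith

lemma focalSum_add_div {a l : ℝ} (ha : 0 < a) (hl : 0 < l) {x : ℂ} (hx : x ≠ 0) :
    focalSum a l (a * x + l / x) = 2 * (a * ‖x‖ + l / ‖x‖) := by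
  have hx' : ‖x‖ ≠ 0 := norm_ne_zero_iff.2 hx
  have h1 : ((√a : ℝ) : ℂ) ^ 2 = a := by exact_mod_cast Real.sq_sqrt ha.le
  have h2 : ((√l : ℝ) : ℂ) ^ 2 = l := by exact_mod_cast Real.sq_sqrt hl.le
  have h3 : √(a * l) = √a * √l := Real.sqrt_mul ha.le l
  unfold focalSum
  rw [show (a : ℂ) * x + l / x - (2 * √(a * l) : ℝ) = ((√a : ℝ) * x - (√l : ℝ)) ^ 2 / x by
      rw [h3]; field_simp; push_cast; linear_combination -(x ^ 2 * h1) - h2,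
    show (a : ℂ) * x + l / x + (2 * √(a * l) : ℝ) = ((√a : ℝ) * x + (√l : ℝ)) ^ 2 / x by
      rw [h3]; field_simp; push_cast; linear_combination -(x ^ 2 * h1) - h2]
  rw [norm_div, norm_div, norm_pow, norm_pow]
  have hp := parallelogram_law_with_norm ℝ ((√a : ℝ) * x) ((√l : ℝ) : ℂ)
  rw [norm_mul, Complex.norm_real, Complex.norm_real, Real.norm_of_nonneg (Real.sqrt_nonneg _),
    Real.norm_of_nonneg (Real.sqrt_nonneg _)] at hp
  have h4 := Real.mul_self_sqrt ha.le
  have h5 := Real.mul_self_sqrt hl.le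
  field_simp
  linear_combination hp + 2 * ‖x‖ ^ 2 * h4 + 2 * h5

lemma discr_mem_slitPlane {a l : ℝ} (ha : 0 < a) (hl : 0 < l) {w : ℂ}
    (hw : 2 * (2 * √(a * l)) < focalSum a l w) :
    w ≠ 0 ∧ 1 - 4 * a * l / w ^ 2 ∈ Complex.slitPlane := by
  have hw0 : w ≠ 0 := by
    rintro rfl
    have := focalSum_of_real (a := a) (l := l) (d := 0) (by rw [abs_zero]; positivity)
    simp only [Complex.ofReal_zero] at this
    linarith
  refine ⟨hw0, ?_⟩
  by_contra hz
  rw [Complex.mem_slitPlane_iff, not_or, not_lt, not_not] at hz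
  obtain ⟨k, hk⟩ : ∃ k : ℝ, 1 - 4 * a * l / w ^ 2 = -(k : ℂ) := by
    refine ⟨-(1 - 4 * a * l / w ^ 2).re, ?_⟩
    apply Complex.ext <;> simp only [Complex.neg_re, Complex.neg_im, Complex.ofReal_re,
      Complex.ofReal_im, neg_neg, neg_zero, hz.2]
  have hk0 : 0 ≤ k := by
    have := hz.1
    rw [hk] at this
    simpa using this
  set c := 2 * √(a * l) with hc
  have hc0 : 0 ≤ c := by positivity
  have hcsq : c ^ 2 = 4 * a * l := by
    rw [hc, mul_pow, Real.sq_sqrt (by positivity)]; ring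
  have h1k : 0 < √(1 + k) := Real.sqrt_pos.2 (by linarith)
  have hsq : √(1 + k) ^ 2 = 1 + k := Real.sq_sqrt (by linarith)
  have h4 : (w ^ 2) * (1 + k) = (c : ℂ) ^ 2 := by
    have : ((c ^ 2 : ℝ) : ℂ) = (4 * a * l : ℝ) := by rw [hcsq]
    push_cast at this
    rw [this]
    field_simp at hk
    linear_combination hk
  have hsqC : ((√(1 + k) : ℝ) : ℂ) ^ 2 = 1 + k := by exact_mod_cast hsq
  have h1kC : ((√(1 + k) : ℝ) : ℂ) ≠ 0 := by exact_mod_cast h1k.ne'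
  have h1kge : 1 ≤ √(1 + k) := Real.one_le_sqrt.2 (by linarith)
  have hd : c / √(1 + k) ≤ c := div_le_self hc0 h1kge
  have hd0 : 0 ≤ c / √(1 + k) := by positivity
  have h5 : w ^ 2 = ((c / √(1 + k) : ℝ) : ℂ) ^ 2 := by
    push_cast
    rw [div_pow, hsqC, eq_div_iff (by rw [← hsqC]; exact pow_ne_zero 2 h1kC), h4]
  rcases sq_eq_sq_iff_eq_or_eq_neg.1 h5 with h | h
  · have := focalSum_of_real (a := a) (l := l) (d := c / √(1 + k))
      (by rw [abs_of_nonneg hd0]; exact hd)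
    rw [h, this] at hw
    exact lt_irrefl _ hw
  · have := focalSum_of_real (a := a) (l := l) (d := -(c / √(1 + k)))
      (by rw [abs_neg, abs_of_nonneg hd0]; exact hd)
    rw [h, ← Complex.ofReal_neg, this] at hw
    exact lt_irrefl _ hw

lemma re_cpow_half_pos {z : ℂ} (hz : z ∈ Complex.slitPlane) : 0 < (z ^ (1 / 2 : ℂ)).re := by
  rw [Complex.cpow_def_of_ne_zero (Complex.slitPlane_ne_zero hz), Complex.exp_re]
  refine mul_pos (Real.exp_pos _) (Real.cos_pos_of_mem_Ioo ?_)
  have h1 := Complex.neg_pi_lt_arg z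
  have h2 := lt_of_le_of_ne (Complex.arg_le_pi z) (Complex.mem_slitPlane_iff_arg.1 hz).1
  have : (Complex.log z * (1 / 2)).im = z.arg / 2 := by
    rw [show (1 / 2 : ℂ) = ((1 / 2 : ℝ) : ℂ) by push_cast; rfl, Complex.im_mul_ofReal,
      Complex.log_im]
    ring
  rw [this]
  constructor <;> linarith

lemma smallRoot_spec {a l : ℝ} (ha : 0 < a) (hl : 0 < l) {w : ℂ}
    (hw : 2 * (2 * √(a * l)) < focalSum a l w) :
    smallRoot a l w ≠ 0 ∧ a * smallRoot a l w + l / smallRoot a l w = w ∧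
      a * ‖smallRoot a l w‖ ^ 2 < l := by
  obtain ⟨hw0, hz⟩ := discr_mem_slitPlane ha hl hw
  have hre := re_cpow_half_pos hz
  set σ : ℂ := (1 - 4 * a * l / w ^ 2) ^ (1 / 2 : ℂ) with hσ
  have hσ2 : σ ^ 2 = 1 - 4 * a * l / w ^ 2 := by
    rw [hσ, one_div]
    exact Complex.cpow_nat_inv_pow _ two_ne_zero
  have haC : (a : ℂ) ≠ 0 := by exact_mod_cast ha.ne'
  have hlC : (l : ℂ) ≠ 0 := by exact_mod_cast hl.ne'
  have hx : smallRoot a l w = w * (1 - σ) / (2 * a) := rfl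
  have hprod : a * smallRoot a l w * (w * (1 + σ) / 2) = l * a := by
    rw [hx]
    have : w ^ 2 * σ ^ 2 = w ^ 2 - 4 * a * l := by rw [hσ2]; field_simp
    field_simp
    linear_combination -this
  have hx0 : smallRoot a l w ≠ 0 := by
    intro h
    rw [h] at hprod
    simp [haC, hlC] at hprod
  have hsum : a * smallRoot a l w + w * (1 + σ) / 2 = w := by
    rw [hx]; field_simp; ring
  have hdiv : w * (1 + σ) / 2 = l * a / (a * smallRoot a l w) := by
    rw [eq_div_iff (mul_ne_zero haC hx0)]; linear_combination hprod
  refine ⟨hx0, ?_, ?_⟩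
  · have h' : (l : ℂ) * a / (a * smallRoot a l w) = l / smallRoot a l w := by field_simp
    rw [hdiv, h'] at hsum
    exact hsum
  · have hlt : ‖1 - σ‖ < ‖1 + σ‖ := by
      rw [← sq_lt_sq₀ (norm_nonneg _) (norm_nonneg _), Complex.sq_norm, Complex.sq_norm,
        Complex.normSq_apply, Complex.normSq_apply]
      simp only [Complex.sub_re, Complex.add_re, Complex.one_re, Complex.sub_im, Complex.add_im,
        Complex.one_im]
      nlinarith
    have hwn : 0 < ‖w‖ := norm_pos_iff.2 hw0
    have hn : ‖smallRoot a l w‖ = ‖w‖ * ‖1 - σ‖ / (2 * a) := by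
      rw [hx, norm_div, norm_mul, norm_mul, Complex.norm_real, Real.norm_of_nonneg ha.le]; simp
    have hxn : 0 < ‖smallRoot a l w‖ := norm_pos_iff.2 hx0
    have hn2 := congrArg norm hprod
    rw [norm_mul, norm_mul, norm_div, norm_mul, norm_mul, Complex.norm_real, Complex.norm_real,
      Real.norm_of_nonneg ha.le, Real.norm_of_nonneg hl.le] at hn2
    simp only [Complex.norm_ofNat] at hn2
    have h6 : a * ‖smallRoot a l w‖ < ‖w‖ * ‖1 + σ‖ / 2 := by
      rw [hn]
      have : a * (‖w‖ * ‖1 - σ‖ / (2 * a)) = ‖w‖ * ‖1 - σ‖ / 2 := by field_simp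
      rw [this]
      have := mul_lt_mul_of_pos_left hlt hwn
      linarith
    have h7 := mul_lt_mul_of_pos_left h6 (mul_pos ha hxn)
    rw [hn2] at h7
    have h8 : a * (a * ‖smallRoot a l w‖ ^ 2) < a * l := by linarith [h7]
    exact lt_of_mul_lt_mul_left h8 ha.le

lemma differentiableAt_smallRoot {a l : ℝ} (ha : 0 < a) (hl : 0 < l) {w : ℂ}
    (hw : 2 * (2 * √(a * l)) < focalSum a l w) : DifferentiableAt ℂ (smallRoot a l) w := by
  obtain ⟨hw0, hz⟩ := discr_mem_slitPlane ha hl hw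
  unfold smallRoot
  have h1 : DifferentiableAt ℂ (fun w : ℂ => 1 - 4 * a * l / w ^ 2) w := by
    have := pow_ne_zero 2 hw0
    fun_prop (disch := assumption)
  have h2 : DifferentiableAt ℂ (fun w : ℂ => (1 - 4 * a * l / w ^ 2) ^ (1 / 2 : ℂ)) w :=
    h1.cpow (differentiableAt_const _) hz
  fun_prop

lemma lt_focalSum_add_div {a l : ℝ} (ha : 0 < a) (hl : 0 < l) {x : ℂ} (hx : x ≠ 0)
    (h : a * ‖x‖ ^ 2 < l) : 2 * (2 * √(a * l)) < focalSum a l (a * x + l / x) := by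
  rw [focalSum_add_div ha hl hx]
  have hxn : 0 < ‖x‖ := norm_pos_iff.2 hx
  have h1 := Real.sq_sqrt ha.le
  have h2 := Real.sq_sqrt hl.le
  have h3 : √(a * l) = √a * √l := Real.sqrt_mul ha.le l
  have hne : √a * ‖x‖ - √l ≠ 0 := by
    intro h0
    have : (√a * ‖x‖) ^ 2 = √l ^ 2 := by rw [sub_eq_zero.1 h0]
    rw [mul_pow, h1, h2] at this
    linarith
  have hpos : 0 < (√a * ‖x‖ - √l) ^ 2 := by positivity
  have : a * ‖x‖ + l / ‖x‖ - 2 * √(a * l) = (√a * ‖x‖ - √l) ^ 2 / ‖x‖ := by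
    rw [h3]
    field_simp
    linear_combination -(‖x‖ ^ 2 * h1) - h2
  have := div_pos hpos hxn
  linarith

lemma smallRoot_add_div {a l : ℝ} (ha : 0 < a) (hl : 0 < l) {x : ℂ} (hx : x ≠ 0)
    (h : a * ‖x‖ ^ 2 < l) : smallRoot a l (a * x + l / x) = x := by
  obtain ⟨h0, h1, h2⟩ := smallRoot_spec ha hl (lt_focalSum_add_div ha hl hx h)
  set y := smallRoot a l (a * x + l / x)
  have hfac : (y - x) * (a * y * x - l) = 0 := by
    field_simp at h1
    linear_combination h1
  rcases mul_eq_zero.1 hfac with h3 | h3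
  · exact sub_eq_zero.1 h3
  · have h4 := congrArg norm (sub_eq_zero.1 h3)
    rw [norm_mul, norm_mul, Complex.norm_real, Complex.norm_real, Real.norm_of_nonneg ha.le,
      Real.norm_of_nonneg hl.le] at h4
    have hyn : 0 < ‖y‖ := norm_pos_iff.2 h0
    have hxn : 0 < ‖x‖ := norm_pos_iff.2 hx
    nlinarith [mul_pos hyn hxn, sq_nonneg (‖y‖ - ‖x‖)]

lemma differentiableAt_integral_div_sub {g h : ℝ → ℂ} (hg : Continuous g) (hh : Continuous h)
    {A B : ℝ} {w : ℂ} (hw : ∀ t ∈ uIcc A B, h t ≠ w) :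
    DifferentiableAt ℂ (fun w => ∫ t in A..B, g t / (h t - w)) w := by
  have hK : IsCompact (h '' uIcc A B) := isCompact_uIcc.image hh
  have hwK : w ∉ h '' uIcc A B := by rintro ⟨t, ht, rfl⟩; exact hw t ht rfl
  obtain ⟨ε, hε, hball⟩ := Metric.isOpen_iff.1 hK.isClosed.isOpen_compl w hwK
  have hdist : ∀ t ∈ uIcc A B, ∀ v ∈ ball w (ε / 2), ε / 2 ≤ ‖h t - v‖ := by
    intro t ht v hv
    by_contra hlt
    rw [not_le] at hlt
    refine hball (a := h t) ?_ (mem_image_of_mem h ht)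
    rw [mem_ball, dist_eq_norm] at hv ⊢
    calc ‖h t - w‖ = ‖(h t - v) + (v - w)‖ := by ring_nf
      _ ≤ ‖h t - v‖ + ‖v - w‖ := norm_add_le _ _
      _ < ε := by linarith
  have hne : ∀ t ∈ uIcc A B, ∀ v ∈ ball w (ε / 2), h t - v ≠ 0 := by
    intro t ht v hv h0
    have := hdist t ht v hv
    rw [h0, norm_zero] at this
    linarith
  have hwb : w ∈ ball w (ε / 2) := mem_ball_self (by positivity)
  have hcont : ∀ v ∈ ball w (ε / 2), ContinuousOn (fun t => g t / (h t - v)) (uIcc A B) :=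
    fun v hv => hg.continuousOn.div (hh.sub continuous_const).continuousOn
      fun t ht => hne t ht v hv
  have hcont' : ContinuousOn (fun t => g t / (h t - w) ^ 2) (uIcc A B) :=
    hg.continuousOn.div ((hh.sub continuous_const).pow 2).continuousOn
      fun t ht => pow_ne_zero 2 (hne t ht w hwb)
  refine (intervalIntegral.hasDerivAt_integral_of_dominated_loc_of_deriv_le
    (F := fun v t => g t / (h t - v)) (F' := fun v t => g t / (h t - v) ^ 2)
    (bound := fun t => ‖g t‖ / (ε / 2) ^ 2) (ball_mem_nhds w (half_pos hε))
    ?_ (hcont w hwb).intervalIntegrable ?_ ?_ ?_ ?_).2.differentiableAt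
  · filter_upwards [ball_mem_nhds w (half_pos hε)] with v hv
    exact ((hcont v hv).mono uIoc_subset_uIcc).aestronglyMeasurable measurableSet_uIoc
  · exact (hcont'.mono uIoc_subset_uIcc).aestronglyMeasurable measurableSet_uIoc
  · refine Eventually.of_forall fun t ht v hv => ?_
    rw [norm_div, norm_pow]
    gcongr
    exact hdist t (uIoc_subset_uIcc ht) v hv
  · exact (hg.norm.div_const _).intervalIntegrable _ _
  · refine Eventually.of_forall fun t ht v hv => ?_
    have h0 := hne t (uIoc_subset_uIcc ht) v hv
    exact ((hasDerivAt_const v (g t)).div ((hasDerivAt_id v).const_sub (h t)) h0).congr_deriv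
      (by simp)

/-- The Cauchy-type integral of `f` over the circle of radius `R`, with respect to the variable
`b ζ + m / ζ`. -/
noncomputable def ellipseInt (b m R : ℝ) (f : ℂ → ℂ) (w : ℂ) : ℂ :=
  (2 * Real.pi * I)⁻¹ * ∮ ζ in C(0, R), f ζ * (b - m / ζ ^ 2) / (b * ζ + m / ζ - w)

lemma continuous_comp_circleMap {R : ℝ} (hR : 0 ≤ R) {f : ℂ → ℂ}
    (hf : ContinuousOn f (sphere 0 R)) : Continuous fun θ : ℝ => f (circleMap 0 R θ) :=
  hf.comp_continuous (continuous_circleMap 0 R) fun θ => circleMap_mem_sphere 0 hR θ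

lemma ellipseInt_eq {b m R : ℝ} (f : ℂ → ℂ) (w : ℂ) :
    ellipseInt b m R f w = (2 * Real.pi * I)⁻¹ * ∫ θ in (0 : ℝ)..2 * Real.pi,
      (deriv (circleMap 0 R) θ * (f (circleMap 0 R θ) * (b - m / circleMap 0 R θ ^ 2)))
        / (b * circleMap 0 R θ + m / circleMap 0 R θ - w) := by
  unfold ellipseInt circleIntegral
  congr 1
  refine intervalIntegral.integral_congr fun θ _ => ?_
  simp only [smul_eq_mul]
  ring

lemma continuous_div_circleMap {m R : ℝ} (hR : 0 < R) (n : ℕ) :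
    Continuous fun θ : ℝ => (m : ℂ) / circleMap 0 R θ ^ n :=
  continuous_const.div ((continuous_circleMap 0 R).pow n)
    fun _ => pow_ne_zero n (circleMap_ne_center hR.ne')

lemma continuous_deriv_circleMap (R : ℝ) : Continuous (deriv (circleMap 0 R)) := by
  have : deriv (circleMap 0 R) = fun θ => circleMap 0 R θ * I := by
    ext θ; exact deriv_circleMap 0 R θ
  rw [this]
  fun_prop

lemma continuous_ellipseInt_numerator {b m R : ℝ} (hR : 0 < R) {f : ℂ → ℂ}
    (hf : ContinuousOn f (sphere 0 R)) :
    Continuous fun θ => deriv (circleMap 0 R) θ *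
      (f (circleMap 0 R θ) * (b - m / circleMap 0 R θ ^ 2)) :=
  (continuous_deriv_circleMap R).mul ((continuous_comp_circleMap hR.le hf).mul
    (continuous_const.sub (continuous_div_circleMap hR 2)))

lemma continuous_ellipse {b m R : ℝ} (hR : 0 < R) :
    Continuous fun θ => (b : ℂ) * circleMap 0 R θ + m / circleMap 0 R θ := by
  have := continuous_div_circleMap (m := m) hR 1
  simp only [pow_one] at this
  exact (continuous_const.mul (continuous_circleMap 0 R)).add this

lemma differentiableAt_ellipseInt {b m R : ℝ} (hR : 0 < R) {f : ℂ → ℂ}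
    (hf : ContinuousOn f (sphere 0 R)) {w : ℂ}
    (hw : ∀ ζ ∈ sphere (0 : ℂ) R, b * ζ + m / ζ ≠ w) :
    DifferentiableAt ℂ (ellipseInt b m R f) w := by
  have := (differentiableAt_integral_div_sub (continuous_ellipseInt_numerator (b := b) (m := m)
    hR hf) (continuous_ellipse (b := b) (m := m) hR) (A := 0) (B := 2 * Real.pi) (w := w)
    fun t _ => hw _ (circleMap_mem_sphere 0 hR.le t)).const_mul (2 * Real.pi * I)⁻¹
  refine this.congr_of_eventuallyEq (Eventually.of_forall fun v => ?_)
  exact ellipseInt_eq f v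

lemma tendsto_ellipseInt_cocompact {b m R : ℝ} (hR : 0 < R) {f : ℂ → ℂ}
    (hf : ContinuousOn f (sphere 0 R)) :
    Tendsto (ellipseInt b m R f) (cocompact ℂ) (𝓝 0) := by
  have hg := continuous_ellipseInt_numerator (b := b) (m := m) hR hf
  have hh := continuous_ellipse (b := b) (m := m) hR
  obtain ⟨M, hM⟩ := (isCompact_uIcc (a := (0 : ℝ)) (b := 2 * Real.pi)).exists_bound_of_continuousOn
    hg.continuousOn
  obtain ⟨M', hM'⟩ := (isCompact_uIcc (a := (0 : ℝ))
    (b := 2 * Real.pi)).exists_bound_of_continuousOn hh.continuousOn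
  have hnorm : Tendsto (fun w : ℂ => ‖w‖ - M') (cocompact ℂ) atTop :=
    tendsto_atTop_add_const_right _ _ (tendsto_norm_cocompact_atTop (E := ℂ))
  have hlim : Tendsto (fun w : ℂ => ‖(2 * Real.pi * I : ℂ)⁻¹‖ *
      (M / (‖w‖ - M') * |2 * Real.pi - 0|)) (cocompact ℂ) (𝓝 0) := by
    have := ((tendsto_const_nhds (x := M)).div_atTop hnorm).mul_const |2 * Real.pi - 0|
    simpa using this.const_mul ‖(2 * Real.pi * I : ℂ)⁻¹‖
  refine squeeze_zero_norm' ?_ hlim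
  filter_upwards [hnorm.eventually_gt_atTop 0] with w hw
  rw [ellipseInt_eq, norm_mul]
  refine mul_le_mul_of_nonneg_left ?_ (norm_nonneg _)
  refine intervalIntegral.norm_integral_le_of_norm_le_const fun θ hθ => ?_
  have h1 := hM θ (uIoc_subset_uIcc hθ)
  have h2 := hM' θ (uIoc_subset_uIcc hθ)
  rw [norm_div]
  refine div_le_div₀ ((norm_nonneg _).trans h1) h1 hw ?_
  rw [norm_sub_rev]
  exact (sub_le_sub_left h2 _).trans (norm_sub_norm_le _ _)

lemma ellipse_kernel_eq {b m : ℝ} {ζ y : ℂ} (hζ : ζ ≠ 0) (hy : y ≠ 0)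
    (h1 : ζ ≠ y) (h2 : b * y * ζ - m ≠ 0) :
    ((b : ℂ) - m / ζ ^ 2) / (b * ζ + m / ζ - (b * y + m / y))
      = (ζ - y)⁻¹ + (b * y / (b * y * ζ - m) - ζ⁻¹) := by
  have h1' := sub_ne_zero.2 h1
  have h3 : (b : ℂ) * ζ + m / ζ - (b * y + m / y) = (ζ - y) * (b * y * ζ - m) / (ζ * y) := by
    field_simp
    ring
  obtain ⟨d, hd⟩ : ∃ d : ℂ, d = b * y * ζ - m := ⟨_, rfl⟩
  have hm : (m : ℂ) = b * y * ζ - d := by rw [hd]; ring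
  rw [h3, ← hd, hm]
  rw [← hd] at h2
  field_simp
  ring

/-- A Cauchy formula on an annulus, in the variable `b ζ + m / ζ`. -/
lemma ellipseInt_sub_ellipseInt {b m r R : ℝ} (hb : 0 < b) (hR : 0 < R) (hr : b * r ^ 2 = m)
    {f : ℂ → ℂ} (hf : ∀ ζ : ℂ, R ≤ ‖ζ‖ → ‖ζ‖ ≤ r → DifferentiableAt ℂ f ζ) {y : ℂ}
    (hRy : R < ‖y‖) (hyr : ‖y‖ < r) :
    f y = ellipseInt b m r f (b * y + m / y) - ellipseInt b m R f (b * y + m / y) := by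
  have hr0 : 0 < r := hR.trans (hRy.trans hyr)
  have hy0 : y ≠ 0 := norm_pos_iff.1 (hR.trans hRy)
  have hne : ∀ ζ : ℂ, ‖ζ‖ ≤ r → b * y * ζ - m ≠ 0 := by
    intro ζ hζ h0
    have := congrArg norm (sub_eq_zero.1 h0)
    rw [norm_mul, norm_mul, norm_real, norm_real, ← hr, Real.norm_of_nonneg hb.le,
      Real.norm_of_nonneg (by positivity)] at this
    have h1 : ‖y‖ * ‖ζ‖ < r ^ 2 := by nlinarith [norm_nonneg ζ, norm_nonneg y]
    nlinarith
  set g : ℂ → ℂ := fun ζ => dslope f y ζ + f ζ * (b * y / (b * y * ζ - m) - ζ⁻¹) with hg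
  have hsecond : ∀ ζ : ℂ, R ≤ ‖ζ‖ → ‖ζ‖ ≤ r →
      DifferentiableAt ℂ (fun ζ => f ζ * (b * y / (b * y * ζ - m) - ζ⁻¹)) ζ := by
    intro ζ h1 h2
    have hζ0 : ζ ≠ 0 := norm_pos_iff.1 (hR.trans_le h1)
    have h3 := hne ζ h2
    have h4 := hf ζ h1 h2
    fun_prop (disch := assumption)
  have hgc : ContinuousOn g (closedBall 0 r \ ball 0 R) := by
    intro ζ hζ
    have h1 : R ≤ ‖ζ‖ := by simpa using hζ.2
    have h2 : ‖ζ‖ ≤ r := by simpa using hζ.1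
    refine ContinuousAt.continuousWithinAt (ContinuousAt.add ?_ (hsecond ζ h1 h2).continuousAt)
    by_cases h : ζ = y
    · rw [h]
      exact continuousAt_dslope_same.2 (hf y hRy.le hyr.le)
    · exact (continuousAt_dslope_of_ne h).2 (hf ζ h1 h2).continuousAt
  have hgd : ∀ ζ ∈ (ball (0 : ℂ) r \ closedBall 0 R) \ {y}, DifferentiableAt ℂ g ζ := by
    intro ζ hζ
    have h1 : R ≤ ‖ζ‖ := by
      have := hζ.1.2
      rw [mem_closedBall_zero_iff, not_le] at this
      exact this.le
    have h2 : ‖ζ‖ ≤ r := by simpa using (mem_ball_zero_iff.1 hζ.1.1).le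
    exact ((differentiableAt_dslope_of_ne hζ.2).2 (hf ζ h1 h2)).add (hsecond ζ h1 h2)
  have hgint := circleIntegral_eq_of_differentiable_on_annulus_off_countable hR
    (hRy.trans hyr).le (countable_singleton y) hgc hgd
  have hsplit : ∀ ρ : ℝ, 0 < ρ → R ≤ ρ → ρ ≤ r → ρ ≠ ‖y‖ →
      (∮ ζ in C(0, ρ), f ζ * (b - m / ζ ^ 2) / (b * ζ + m / ζ - (b * y + m / y)))
        = (∮ ζ in C(0, ρ), g ζ) + f y * ∮ ζ in C(0, ρ), (ζ - y)⁻¹ := by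
    intro ρ hρ h1 h2 h3
    have hney : ∀ ζ ∈ sphere (0 : ℂ) ρ, ζ ≠ y := by
      rintro ζ hζ rfl
      exact h3 (mem_sphere_zero_iff_norm.1 hζ).symm
    have hi1 : CircleIntegrable g 0 ρ := by
      refine (hgc.mono ?_).circleIntegrable hρ.le
      intro ζ hζ
      rw [mem_sphere_zero_iff_norm] at hζ
      simp [hζ, h1, h2]
    have hi2 : CircleIntegrable (fun ζ => f y * (ζ - y)⁻¹) 0 ρ := by
      refine ContinuousOn.circleIntegrable hρ.le ?_
      exact continuousOn_const.mul ((continuousOn_id.sub continuousOn_const).inv₀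
        fun ζ hζ => sub_ne_zero.2 (hney ζ hζ))
    rw [← circleIntegral.integral_const_mul, ← circleIntegral.integral_add hi1 hi2]
    refine circleIntegral.integral_congr hρ.le fun ζ hζ => ?_
    have hζn := mem_sphere_zero_iff_norm.1 hζ
    have hζ0 : ζ ≠ 0 := norm_pos_iff.1 (by rw [hζn]; exact hρ)
    have h4 := hney ζ hζ
    simp only [hg]
    rw [mul_div_assoc, ellipse_kernel_eq hζ0 hy0 h4 (hne ζ (by rw [hζn]; exact h2)),
      dslope_of_ne _ h4, slope_def_field]
    ring
  have hin : (∮ ζ in C(0, r), (ζ - y)⁻¹) = 2 * Real.pi * I :=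
    circleIntegral.integral_sub_inv_of_mem_ball (by simpa using hyr)
  have hout : (∮ ζ in C(0, R), (ζ - y)⁻¹) = 0 := by
    have hne' : ∀ ζ ∈ closedBall (0 : ℂ) R, ζ - y ≠ 0 := by
      intro ζ hζ h0
      rw [sub_eq_zero.1 h0, mem_closedBall_zero_iff] at hζ
      linarith
    refine circleIntegral_eq_zero_of_differentiable_on_off_countable hR.le countable_empty ?_ ?_
    · exact (continuousOn_id.sub continuousOn_const).inv₀ hne'
    · intro ζ hζ
      have := hne' ζ (ball_subset_closedBall hζ.1)
      fun_prop (disch := assumption)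
  unfold ellipseInt
  rw [hsplit r hr0 (hRy.trans hyr).le le_rfl hyr.ne', hsplit R hR le_rfl (hRy.trans hyr).le hRy.ne,
    hin, hout, hgint]
  have : (2 * Real.pi * I : ℂ) ≠ 0 := two_pi_I_ne_zero
  field_simp
  ring

lemma two_mul_sqrt_lt_add {a l : ℝ} (ha : 0 < a) (hal : a < l) : 2 * √(a * l) < a + l := by
  have : √(a * l) < (a + l) / 2 := by
    rw [Real.sqrt_lt' (by linarith)]
    nlinarith [sq_pos_of_pos (sub_pos.2 hal)]
  linarith

lemma norm_smallRoot_lt_one {a l : ℝ} (ha : 0 < a) (hal : a < l) {w : ℂ}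
    (hw : 2 * (a + l) < focalSum a l w) : ‖smallRoot a l w‖ < 1 := by
  have hl := ha.trans hal
  obtain ⟨h0, h1, h2⟩ := smallRoot_spec ha hl (w := w)
    (by linarith [two_mul_sqrt_lt_add ha hal])
  have h3 := focalSum_add_div ha hl h0
  rw [h1] at h3
  have ht := norm_pos_iff.2 h0
  by_contra hge
  rw [not_lt] at hge
  have : a * ‖smallRoot a l w‖ + l / ‖smallRoot a l w‖ ≤ a + l := by
    rw [← sub_nonpos]
    have : a * ‖smallRoot a l w‖ + l / ‖smallRoot a l w‖ - (a + l)
        = (‖smallRoot a l w‖ - 1) * (a * ‖smallRoot a l w‖ - l) / ‖smallRoot a l w‖ := by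
      field_simp; ring
    rw [this]
    exact div_nonpos_of_nonpos_of_nonneg
      (mul_nonpos_of_nonneg_of_nonpos (by linarith) (by nlinarith)) ht.le
  linarith

lemma lt_norm_smallRoot {a l R : ℝ} (ha : 0 < a) (hl : 0 < l) (hR : 0 < R) (hRl : a * R ^ 2 ≤ l)
    {w : ℂ} (hw : 2 * (2 * √(a * l)) < focalSum a l w)
    (hwR : focalSum a l w < 2 * (a * R + l / R)) : R < ‖smallRoot a l w‖ := by
  obtain ⟨h0, h1, h2⟩ := smallRoot_spec ha hl hw
  have h3 := focalSum_add_div ha hl h0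
  rw [h1] at h3
  have ht := norm_pos_iff.2 h0
  by_contra hle
  rw [not_lt] at hle
  have : 0 ≤ a * ‖smallRoot a l w‖ + l / ‖smallRoot a l w‖ - (a * R + l / R) := by
    have : a * ‖smallRoot a l w‖ + l / ‖smallRoot a l w‖ - (a * R + l / R)
        = (R - ‖smallRoot a l w‖) * (l - a * R * ‖smallRoot a l w‖)
          / (R * ‖smallRoot a l w‖) := by
      field_simp; ring
    rw [this]
    have h5 : a * R * ‖smallRoot a l w‖ ≤ a * R * R := by gcongr
    exact div_nonneg (mul_nonneg (by linarith) (by nlinarith)) (by positivity)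
  linarith

lemma tendsto_smallRoot_cocompact {a l : ℝ} (ha : 0 < a) (hal : a < l) :
    Tendsto (smallRoot a l) (cocompact ℂ) (𝓝 0) := by
  have hl := ha.trans hal
  have hnorm : Tendsto (fun w : ℂ => ‖w‖ - a) (cocompact ℂ) atTop :=
    tendsto_atTop_add_const_right _ _ (tendsto_norm_cocompact_atTop (E := ℂ))
  refine squeeze_zero_norm' ?_ ((tendsto_const_nhds (x := l)).div_atTop hnorm)
  filter_upwards [hnorm.eventually_gt_atTop l] with w hw
  have hw' : 2 * (a + l) < focalSum a l w := by
    linarith [two_mul_norm_le_focalSum a l w]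
  have hlt := norm_smallRoot_lt_one ha hal hw'
  obtain ⟨h0, h1, -⟩ := smallRoot_spec ha hl (w := w)
    (by linarith [two_mul_sqrt_lt_add ha hal])
  have ht := norm_pos_iff.2 h0
  have h2 := norm_add_le ((a : ℂ) * smallRoot a l w) (l / smallRoot a l w)
  rw [h1, norm_mul, norm_div, norm_real, norm_real, Real.norm_of_nonneg ha.le,
    Real.norm_of_nonneg hl.le] at h2
  have h3 : ‖w‖ - a ≤ l / ‖smallRoot a l w‖ := by nlinarith
  rw [le_div_iff₀ ht] at h3
  rw [le_div_iff₀ (by linarith)]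
  linarith

/-- The ratio of the boundary generating functions on the zero set of the kernel. -/
noncomputable def couplingRatio (a l b m p1 p2 : ℝ) (x y : ℂ) : ℂ :=
  ((l - a * x) + p2 * (m - b * y)) / ((m - b * y) + p1 * (l - a * x))

/-- The logarithm of the coupling ratio along the branch `x = smallRoot`. -/
noncomputable def logCoupling (a l b m p1 p2 : ℝ) (y : ℂ) : ℂ :=
  log (couplingRatio a l b m p1 p2 (smallRoot a l ((l + m + a + b) - (b * y + m / y))) y)

lemma re_sub_pos {a l : ℝ} (ha : 0 < a) (hal : a < l) {x : ℂ} (hx : a * ‖x‖ ^ 2 ≤ l) :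
    0 < ((l : ℂ) - a * x).re := by
  have h1 : ((l : ℂ) - a * x).re = l - a * x.re := by simp
  have h2 := re_le_norm x
  have h3 : a * ‖x‖ < l := by
    by_contra h
    rw [not_lt] at h
    have : 1 < ‖x‖ := by
      by_contra h'
      nlinarith [norm_nonneg x]
    nlinarith
  rw [h1]
  nlinarith

lemma div_mem_slitPlane {z w : ℂ} (hz : 0 < z.re) (hw : 0 < w.re) : z / w ∈ slitPlane := by
  have hw0 : w ≠ 0 := by rintro rfl; simp at hw
  by_contra h
  rw [mem_slitPlane_iff, not_or, not_lt, not_not] at h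
  have h1 : z / w = ((z / w).re : ℂ) := by apply Complex.ext <;> simp [h.2]
  have h2 : z = ((z / w).re : ℂ) * w := by rw [← h1]; field_simp
  have h3 := congrArg re h2
  rw [re_ofReal_mul] at h3
  nlinarith [h.1]

lemma re_coupling_pos {u v : ℂ} {p : ℝ} (hp : 0 ≤ p) (hu : 0 < u.re) (hv : 0 < v.re) :
    0 < (u + p * v).re := by
  rw [add_re, re_ofReal_mul]
  positivity

lemma couplingRatio_mem_slitPlane {a l b m p1 p2 : ℝ} (ha : 0 < a) (hal : a < l) (hb : 0 < b)
    (hbm : b < m) (hp1 : 0 ≤ p1) (hp2 : 0 ≤ p2) {x y : ℂ} (hx : a * ‖x‖ ^ 2 ≤ l)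
    (hy : b * ‖y‖ ^ 2 ≤ m) : couplingRatio a l b m p1 p2 x y ∈ slitPlane :=
  div_mem_slitPlane (re_coupling_pos hp2 (re_sub_pos ha hal hx) (re_sub_pos hb hbm hy))
    (re_coupling_pos hp1 (re_sub_pos hb hbm hy) (re_sub_pos ha hal hx))

lemma differentiableAt_logCoupling {a l b m p1 p2 : ℝ} (ha : 0 < a) (hal : a < l) (hb : 0 < b)
    (hbm : b < m) (hp1 : 0 ≤ p1) (hp2 : 0 ≤ p2) {y : ℂ} (hy0 : y ≠ 0) (hy : b * ‖y‖ ^ 2 ≤ m)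
    (hw : 2 * (2 * √(a * l)) < focalSum a l ((l + m + a + b) - (b * y + m / y))) :
    DifferentiableAt ℂ (logCoupling a l b m p1 p2) y := by
  have hl := ha.trans hal
  obtain ⟨h0, h1, h2⟩ := smallRoot_spec ha hl hw
  have h3 : DifferentiableAt ℂ
      (fun y : ℂ => smallRoot a l ((l + m + a + b) - (b * y + m / y))) y := by
    refine DifferentiableAt.comp y (differentiableAt_smallRoot ha hl hw) ?_
    fun_prop (disch := assumption)
  refine DifferentiableAt.clog ?_ (couplingRatio_mem_slitPlane ha hal hb hbm hp1 hp2 h2.le hy)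
  have h4 := re_coupling_pos hp1 (re_sub_pos hb hbm hy) (re_sub_pos ha hal h2.le)
  have h5 : ((m : ℂ) - b * y) + p1 * (l - a * smallRoot a l ((l + m + a + b) - (b * y + m / y)))
      ≠ 0 := by
    intro h
    rw [h] at h4
    simp at h4
  unfold couplingRatio
  fun_prop (disch := assumption)

lemma add_div_le_add_div {b m R t : ℝ} (hR : 0 < R) (hRt : R ≤ t) (hb : 0 < b)
    (ht : b * t ^ 2 ≤ m) : b * t + m / t ≤ b * R + m / R := by
  have ht0 : 0 < t := hR.trans_le hRt
  rw [← sub_nonneg]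
  have : b * R + m / R - (b * t + m / t) = (t - R) * (m - b * t * R) / (R * t) := by
    field_simp; ring
  rw [this]
  have h5 : b * t * R ≤ b * t * t := by gcongr
  exact div_nonneg (mul_nonneg (by linarith) (by nlinarith)) (by positivity)

lemma lt_focalSum_of_mem_annulus {a l b m R : ℝ} (hb : 0 < b) (hm : 0 < m) (hR : 0 < R)
    (hRs : b * R + m / R < l + m + a + b - 2 * √(a * l)) {y : ℂ} (hRy : R ≤ ‖y‖)
    (hy : b * ‖y‖ ^ 2 ≤ m) :
    2 * (2 * √(a * l)) < focalSum a l ((l + m + a + b) - (b * y + m / y)) := by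
  refine focalSum_of_re_le ?_
  have h1 : (((l : ℂ) + m + a + b) - (b * y + m / y)).re
      = l + m + a + b - ((b : ℂ) * y + m / y).re := by
    rw [sub_re]; simp
  have h2 := re_le_norm ((b : ℂ) * y + m / y)
  have h3 := norm_add_le ((b : ℂ) * y) (m / y)
  rw [norm_mul, norm_div, norm_real, norm_real, Real.norm_of_nonneg hb.le,
    Real.norm_of_nonneg hm.le] at h3
  have h4 := add_div_le_add_div hR hRy hb hy
  rw [h1]
  linarith

lemma exists_inner_radius {a l b m : ℝ} (ha : 0 < a) (hal : a < l) :
    ∃ R : ℝ, 0 < R ∧ R < 1 ∧ b * R + m / R < l + m + a + b - 2 * √(a * l) := by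
  have hc : ContinuousAt (fun R : ℝ => b * R + m / R) 1 := by
    have : (1 : ℝ) ≠ 0 := one_ne_zero
    fun_prop (disch := assumption)
  have hlt : (fun R : ℝ => b * R + m / R) 1 < l + m + a + b - 2 * √(a * l) := by
    have := two_mul_sqrt_lt_add ha hal
    simp only [mul_one, div_one]
    linarith
  have h1 := (hc.eventually_lt continuousAt_const hlt).filter_mono
    (nhdsWithin_le_nhds (s := Iio 1))
  have h2 : ∀ᶠ R in 𝓝[<] (1 : ℝ), (0 : ℝ) < R :=
    (eventually_gt_nhds zero_lt_one).filter_mono nhdsWithin_le_nhds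
  obtain ⟨R, h3, h4, h5⟩ := (h1.and (h2.and self_mem_nhdsWithin)).exists
  exact ⟨R, h4, h5, h3⟩

/-- The Riemann–Hilbert problem on two touching ellipses, solved by the Liouville theorem. -/
lemma eq_mul_exp_ellipseInt {a l b m p1 p2 r : ℝ} (ha : 0 < a) (hal : a < l) (hb : 0 < b)
    (hbm : b < m) (hp1 : 0 ≤ p1) (hp2 : 0 ≤ p2) (hr0 : 0 < r) (hr : b * r ^ 2 = m)
    {Φ Ψ : ℂ → ℂ}
    (hΦd : DifferentiableOn ℂ Φ (ball 0 1)) (hΦc : ContinuousOn Φ (closedBall 0 1))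
    (hΨd : DifferentiableOn ℂ Ψ (ball 0 1)) (hΨc : ContinuousOn Ψ (closedBall 0 1))
    (hrel : ∀ x y : ℂ, x ≠ 0 → y ≠ 0 → ‖x‖ < 1 → ‖y‖ < 1 →
      a * x + l / x + (b * y + m / y) = l + m + a + b →
      ((m - b * y) + p1 * (l - a * x)) * Φ y = ((l - a * x) + p2 * (m - b * y)) * Ψ x) :
    Φ 1 = Φ 0 * exp (ellipseInt b m r (logCoupling a l b m p1 p2) (b + m)) := by
  have hl := ha.trans hal
  have hm := hb.trans hbm
  obtain ⟨R, hR0, hR1, hRs⟩ := exists_inner_radius (b := b) (m := m) ha hal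
  have hr1 : 1 < r := by
    by_contra h
    rw [not_lt] at h
    have : r ^ 2 ≤ 1 := pow_le_one₀ hr0.le h
    nlinarith
  have hcb := two_mul_sqrt_lt_add hb hbm
  have hca := two_mul_sqrt_lt_add ha hal
  have hcr : √(b * m) = b * r := by
    rw [← hr, show b * (b * r ^ 2) = (b * r) ^ 2 by ring, Real.sqrt_sq (by positivity)]
  have hbR : b + m < b * R + m / R := by
    have : b * R + m / R - (b + m) = (1 - R) * (m - b * R) / R := by field_simp; ring
    have : 0 < (1 - R) * (m - b * R) / R :=
      div_pos (mul_pos (by linarith) (by nlinarith)) hR0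
    linarith
  have hRm : b * R ^ 2 ≤ m := by nlinarith [pow_le_one₀ hR0.le hR1.le (n := 2)]
  set Λ := logCoupling a l b m p1 p2 with hΛ
  have hΛd : ∀ ζ : ℂ, R ≤ ‖ζ‖ → ‖ζ‖ ≤ r → DifferentiableAt ℂ Λ ζ := by
    intro ζ h1 h2
    have h3 : b * ‖ζ‖ ^ 2 ≤ m := by rw [← hr]; gcongr
    exact differentiableAt_logCoupling ha hal hb hbm hp1 hp2 (norm_pos_iff.1 (hR0.trans_le h1)) h3
      (lt_focalSum_of_mem_annulus hb hm hR0 hRs h1 h3)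
  have hΛr : ContinuousOn Λ (sphere 0 r) := fun ζ hζ => by
    rw [mem_sphere_zero_iff_norm] at hζ
    exact (hΛd ζ (by linarith) hζ.le).continuousAt.continuousWithinAt
  have hΛR : ContinuousOn Λ (sphere 0 R) := fun ζ hζ => by
    rw [mem_sphere_zero_iff_norm] at hζ
    exact (hΛd ζ hζ.ge (by linarith)).continuousAt.continuousWithinAt
  have hIr : ∀ w : ℂ, 2 * (2 * √(b * m)) < focalSum b m w →
      DifferentiableAt ℂ (ellipseInt b m r Λ) w := by
    intro w hw
    refine differentiableAt_ellipseInt hr0 hΛr ?_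
    rintro ζ hζ rfl
    rw [mem_sphere_zero_iff_norm] at hζ
    rw [focalSum_add_div hb hm (norm_pos_iff.1 (by linarith)), hζ, hcr, ← hr] at hw
    have : b * r ^ 2 / r = b * r := by field_simp
    linarith
  have hIR : ∀ w : ℂ, focalSum b m w < 2 * (b * R + m / R) →
      DifferentiableAt ℂ (ellipseInt b m R Λ) w := by
    intro w hw
    refine differentiableAt_ellipseInt hR0 hΛR ?_
    rintro ζ hζ rfl
    rw [mem_sphere_zero_iff_norm] at hζ
    rw [focalSum_add_div hb hm (norm_pos_iff.1 (by linarith)), hζ] at hw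
    exact lt_irrefl _ hw
  -- the two local expressions of the entire function
  set N₁ : ℂ → ℂ := fun w => Φ (smallRoot b m w) * exp (-ellipseInt b m r Λ w) with hN₁
  set N₂ : ℂ → ℂ := fun w =>
    Ψ (smallRoot a l (l + m + a + b - w)) * exp (-ellipseInt b m R Λ w) with hN₂
  set N : ℂ → ℂ := fun w => if 2 * (b + m) < focalSum b m w then N₁ w else N₂ w with hN
  have hX : ∀ w : ℂ, w.re < b + m → 2 * (a + l) < focalSum a l (l + m + a + b - w) := by
    intro w hw
    have h1 := two_mul_norm_le_focalSum a l (l + m + a + b - w)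
    have h2 := re_le_norm ((l : ℂ) + m + a + b - w)
    have h3 : ((l : ℂ) + m + a + b - w).re = l + m + a + b - w.re := by simp
    linarith
  have hre : ∀ w : ℂ, w ≠ b + m → focalSum b m w ≤ 2 * (b + m) → w.re < b + m := by
    intro w hw hle
    have h1 := two_mul_norm_le_focalSum b m w
    have h2 := re_le_norm w
    refine lt_of_le_of_ne (by linarith) fun h3 => hw ?_
    have h4 : ‖w‖ = w.re := by linarith
    have h5 : (w.re : ℂ) = w := by
      have := (Complex.re_eq_norm (z := w)).1 h4.symm
      have him := (Complex.nonneg_iff.1 this).2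
      apply Complex.ext <;> simp [← him]
    rw [← h5, h3]
    push_cast
    ring
  have hagree : ∀ w : ℂ, 2 * (b + m) < focalSum b m w → focalSum b m w < 2 * (b * R + m / R) →
      w.re < b + m → N₁ w = N₂ w := by
    intro w h1 h2 h3
    have h4 := hX w h3
    obtain ⟨hy0, hyw, hym⟩ := smallRoot_spec hb hm (w := w) (by linarith)
    obtain ⟨hx0, hxw, hxl⟩ := smallRoot_spec ha hl (w := l + m + a + b - w) (by linarith)
    have hy1 := norm_smallRoot_lt_one hb hbm h1
    have hx1 := norm_smallRoot_lt_one ha hal h4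
    have hyR := lt_norm_smallRoot hb hm hR0 hRm (by linarith) h2
    have hsplit := ellipseInt_sub_ellipseInt hb hR0 hr hΛd hyR (hy1.trans hr1)
    have hrel' := hrel _ _ hx0 hy0 hx1 hy1 (by rw [hxw, hyw]; ring)
    rw [hyw] at hsplit
    have hexp : exp (Λ (smallRoot b m w)) = couplingRatio a l b m p1 p2
        (smallRoot a l (l + m + a + b - w)) (smallRoot b m w) := by
      rw [hΛ, logCoupling, hyw]
      exact exp_log (slitPlane_ne_zero
        (couplingRatio_mem_slitPlane ha hal hb hbm hp1 hp2 hxl.le hym.le))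
    have hQ : ((m : ℂ) - b * smallRoot b m w)
        + p1 * (l - a * smallRoot a l (l + m + a + b - w)) ≠ 0 := by
      have := re_coupling_pos hp1 (re_sub_pos hb hbm hym.le) (re_sub_pos ha hal hxl.le)
      intro h
      rw [h] at this
      simp at this
    have hΦ : Φ (smallRoot b m w) = exp (Λ (smallRoot b m w))
        * Ψ (smallRoot a l (l + m + a + b - w)) := by
      rw [hexp, couplingRatio, div_mul_eq_mul_div, eq_div_iff hQ, ← hrel']
      ring
    simp only [hN₁, hN₂]
    rw [hΦ, hsplit, mul_right_comm, ← exp_add, mul_comm (Ψ _)]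
    congr 2
    ring
  have hN₁d : ∀ w : ℂ, 2 * (b + m) < focalSum b m w → DifferentiableAt ℂ N₁ w := by
    intro w hw
    have hy1 := norm_smallRoot_lt_one hb hbm hw
    refine DifferentiableAt.mul ?_ (hIr w (by linarith)).neg.cexp
    exact DifferentiableAt.comp w
      (hΦd.differentiableAt (isOpen_ball.mem_nhds (by simpa using hy1)))
      (differentiableAt_smallRoot hb hm (by linarith))
  have hN₂d : ∀ w : ℂ, focalSum b m w < 2 * (b * R + m / R) → w.re < b + m →
      DifferentiableAt ℂ N₂ w := by
    intro w h1 h2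
    have hx1 := norm_smallRoot_lt_one ha hal (hX w h2)
    refine DifferentiableAt.mul ?_ (hIR w h1).neg.cexp
    refine DifferentiableAt.comp (g := Ψ) w
      (hΨd.differentiableAt (isOpen_ball.mem_nhds (by simpa using hx1))) ?_
    refine DifferentiableAt.comp (g := smallRoot a l) w
      (differentiableAt_smallRoot ha hl (by linarith [hX w h2])) ?_
    fun_prop
  have hfc := continuous_focalSum b m
  have hNd : ∀ w : ℂ, w ≠ b + m → DifferentiableAt ℂ N w := by
    intro w hw
    by_cases h : 2 * (b + m) < focalSum b m w
    · refine (hN₁d w h).congr_of_eventuallyEq ?_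
      filter_upwards [(isOpen_lt continuous_const hfc).mem_nhds h] with v hv
      exact if_pos hv
    · rw [not_lt] at h
      have h2 := hre w hw h
      have h1 : focalSum b m w < 2 * (b * R + m / R) := by linarith
      refine (hN₂d w h1 h2).congr_of_eventuallyEq ?_
      filter_upwards [(isOpen_lt hfc continuous_const).mem_nhds h1,
        (isOpen_lt continuous_re continuous_const).mem_nhds h2] with v hv1 hv2
      by_cases h3 : 2 * (b + m) < focalSum b m v
      · exact (if_pos h3).trans (hagree v h3 hv1 hv2)
      · exact if_neg h3
  have hw₀f : focalSum b m ((b : ℂ) + m) = 2 * (b + m) := by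
    have := focalSum_add_div hb hm (x := 1) one_ne_zero
    simpa using this
  obtain ⟨M₁, hM₁⟩ := (isCompact_closedBall (0 : ℂ) 1).exists_bound_of_continuousOn hΦc
  obtain ⟨M₂, hM₂⟩ := (isCompact_closedBall (0 : ℂ) 1).exists_bound_of_continuousOn hΨc
  have hIr₀ : ContinuousAt (ellipseInt b m r Λ) (b + m) :=
    (hIr _ (by linarith)).continuousAt
  have hIR₀ : ContinuousAt (ellipseInt b m R Λ) (b + m) :=
    (hIR _ (by linarith)).continuousAt
  have hbdd : IsBoundedUnder (· ≤ ·) (𝓝[≠] ((b : ℂ) + m)) fun w => ‖N w - N (b + m)‖ := by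
    set E₁ := ‖exp (-ellipseInt b m r Λ (b + m))‖ + 1
    set E₂ := ‖exp (-ellipseInt b m R Λ (b + m))‖ + 1
    have he₁ : ∀ᶠ w in 𝓝 ((b : ℂ) + m), ‖exp (-ellipseInt b m r Λ w)‖ < E₁ :=
      hIr₀.neg.cexp.norm.eventually_lt continuousAt_const (lt_add_one _)
    have he₂ : ∀ᶠ w in 𝓝 ((b : ℂ) + m), ‖exp (-ellipseInt b m R Λ w)‖ < E₂ :=
      hIR₀.neg.cexp.norm.eventually_lt continuousAt_const (lt_add_one _)
    refine ⟨max (M₁ * E₁) (M₂ * E₂) + ‖N (b + m)‖, ?_⟩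
    rw [eventually_map]
    filter_upwards [he₁.filter_mono nhdsWithin_le_nhds, he₂.filter_mono nhdsWithin_le_nhds,
      self_mem_nhdsWithin] with w h1 h2 h3
    refine norm_sub_le_of_le ?_ le_rfl
    by_cases h : 2 * (b + m) < focalSum b m w
    · have hy1 := hM₁ _ (mem_closedBall_zero_iff.2 (norm_smallRoot_lt_one hb hbm h).le)
      refine le_trans ?_ (le_max_left _ _)
      simp only [hN, if_pos h, hN₁, norm_mul]
      exact mul_le_mul hy1 h1.le (norm_nonneg _) ((norm_nonneg _).trans hy1)
    · have hx1 := hM₂ _ (mem_closedBall_zero_iff.2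
        (norm_smallRoot_lt_one ha hal (hX w (hre w h3 (not_lt.1 h)))).le)
      refine le_trans ?_ (le_max_right _ _)
      simp only [hN, if_neg h, hN₂, norm_mul]
      exact mul_le_mul hx1 h2.le (norm_nonneg _) ((norm_nonneg _).trans hx1)
  have hupd := differentiableOn_update_limUnder_of_isLittleO (f := N) (c := (b : ℂ) + m)
    (s := univ) univ_mem (fun w hw => (hNd w hw.2).differentiableWithinAt)
    hbdd.isLittleO_sub_self_inv
  rw [differentiableOn_univ] at hupd
  have hlim : Tendsto N (cocompact ℂ) (𝓝 (Φ 0)) := by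
    have h1 : Tendsto N₁ (cocompact ℂ) (𝓝 (Φ 0 * exp (-0))) := by
      refine Tendsto.mul ?_ ((continuous_exp.tendsto _).comp
        (tendsto_ellipseInt_cocompact hr0 hΛr).neg)
      exact (hΦd.differentiableAt (isOpen_ball.mem_nhds (by simp))).continuousAt.tendsto.comp
        (tendsto_smallRoot_cocompact hb hbm)
    rw [neg_zero, exp_zero, mul_one] at h1
    refine h1.congr' ?_
    filter_upwards [(tendsto_norm_cocompact_atTop (E := ℂ)).eventually_gt_atTop (b + m)] with w hw
    refine (if_pos ?_).symm
    linarith [two_mul_norm_le_focalSum b m w]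
  have hlim' : Tendsto (Function.update N (b + m) (limUnder (𝓝[≠] ((b : ℂ) + m)) N))
      (cocompact ℂ) (𝓝 (Φ 0)) := by
    refine hlim.congr' ?_
    filter_upwards [(isCompact_singleton (x := (b : ℂ) + m)).compl_mem_cocompact] with w hw
    exact (Function.update_of_ne hw _ _).symm
  have hconst : ∀ w : ℂ, 2 * (b + m) < focalSum b m w → N₁ w = Φ 0 := by
    intro w hw
    have hne : w ≠ b + m := by rintro rfl; linarith
    have := hupd.apply_eq_of_tendsto_cocompact w hlim'
    rw [Function.update_of_ne hne] at this
    rw [← this]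
    exact (if_pos hw).symm
  -- approach the contact point along the positive real axis
  have hpath : Tendsto (fun t : ℝ => (b : ℂ) + m + t) (𝓝[>] 0) (𝓝 (b + m)) := by
    have : Continuous fun t : ℝ => (b : ℂ) + m + t := by fun_prop
    have := this.tendsto 0
    simp only [ofReal_zero, add_zero] at this
    exact this.mono_left nhdsWithin_le_nhds
  have hpos : ∀ᶠ t : ℝ in 𝓝[>] 0, 2 * (b + m) < focalSum b m ((b : ℂ) + m + t) := by
    filter_upwards [self_mem_nhdsWithin] with t ht
    have h1 := two_mul_norm_le_focalSum b m ((b : ℂ) + m + t)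
    have h2 := re_le_norm ((b : ℂ) + m + t)
    have h3 : ((b : ℂ) + m + t).re = b + m + t := by simp
    have : 0 < t := ht
    linarith
  have hroot1 : smallRoot b m ((b : ℂ) + m) = 1 := by
    have := smallRoot_add_div hb hm (x := 1) one_ne_zero (by simpa using hbm)
    simpa using this
  have hYlim : Tendsto (fun t : ℝ => smallRoot b m ((b : ℂ) + m + t)) (𝓝[>] 0)
      (𝓝[closedBall 0 1] 1) := by
    refine tendsto_nhdsWithin_iff.2 ⟨?_, ?_⟩
    · have := (differentiableAt_smallRoot hb hm (w := (b : ℂ) + m)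
        (by linarith)).continuousAt.tendsto
      rw [hroot1] at this
      exact this.comp hpath
    · filter_upwards [hpos] with t ht
      exact mem_closedBall_zero_iff.2 (norm_smallRoot_lt_one hb hbm ht).le
  have hN₁lim : Tendsto (fun t : ℝ => N₁ ((b : ℂ) + m + t)) (𝓝[>] 0)
      (𝓝 (Φ 1 * exp (-ellipseInt b m r Λ (b + m)))) :=
    ((hΦc 1 (by simp)).tendsto.comp hYlim).mul (hIr₀.neg.cexp.tendsto.comp hpath)
  have hval : Φ 1 * exp (-ellipseInt b m r Λ (b + m)) = Φ 0 := by
    refine tendsto_nhds_unique hN₁lim (tendsto_const_nhds.congr' ?_)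
    filter_upwards [hpos] with t ht
    exact (hconst _ ht).symm
  rw [← hval, mul_assoc, ← exp_add, neg_add_cancel, exp_zero, mul_one]

lemma continuousOn_genFun_left {π : ℕ × ℕ → ℝ} (h0 : ∀ k, 0 ≤ π k) (hs : Summable π) {y : ℂ}
    (hy : ‖y‖ ≤ 1) : ContinuousOn (fun x => genFun π x y) (closedBall 0 1) :=
  (continuousOn_genFun h0 hs).comp (f := fun x : ℂ => (x, y)) (by fun_prop) fun _ hx =>
    ⟨mem_closedBall_zero_iff.1 hx, hy⟩

lemma continuousOn_genFun_right {π : ℕ × ℕ → ℝ} (h0 : ∀ k, 0 ≤ π k) (hs : Summable π) {x : ℂ}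
    (hx : ‖x‖ ≤ 1) : ContinuousOn (fun y => genFun π x y) (closedBall 0 1) :=
  (continuousOn_genFun h0 hs).comp (f := fun y : ℂ => (x, y)) (by fun_prop) fun _ hy =>
    ⟨hx, mem_closedBall_zero_iff.1 hy⟩

lemma sub_one_ne_zero_of_norm_lt_one {x : ℂ} (hx : ‖x‖ < 1) : x - 1 ≠ 0 := by
  intro h
  rw [sub_eq_zero.1 h, norm_one] at hx
  exact lt_irrefl _ hx

lemma eq_at_one_of_mul_sub_one_eq {f g : ℂ → ℂ} (hf : ContinuousOn f (closedBall 0 1))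
    (hg : ContinuousOn g (closedBall 0 1))
    (h : ∀ x : ℂ, ‖x‖ < 1 → (x - 1) * f x = (x - 1) * g x) : f 1 = g 1 :=
  EqOn.of_subset_closure (s := ball (0 : ℂ) 1) (t := closedBall 0 1)
    (fun x hx => mul_left_cancel₀
      (sub_one_ne_zero_of_norm_lt_one (mem_ball_zero_iff.1 hx)) (h x (mem_ball_zero_iff.1 hx)))
    hf hg ball_subset_closedBall (closure_ball (0 : ℂ) one_ne_zero).ge (by simp)

/-- The relation between the boundary generating functions on the zero set of the kernel. -/
lemma boundary_relation {l m a b p1 p2 x y F G H Z : ℂ} (hx : x ≠ 0) (hy : y ≠ 0) (hx1 : ‖x‖ < 1)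
    (hk : a * x + l / x + (b * y + m / y) = l + m + a + b)
    (h : (-a * x ^ 2 * y - b * x * y ^ 2 + (l + m + a + b) * x * y - l * y - m * x) * F
      = (l * y * (x - 1) - p1 * l * x * (y - 1)) * G
        + (m * x * (y - 1) - p2 * m * y * (x - 1)) * H
        + (p2 * m * y * (x - 1) + p1 * l * x * (y - 1)) * Z) :
    ((m - b * y) + p1 * (l - a * x)) * (l * (1 - p1 * p2) * G + (p1 * p2 * l + p2 * m) * Z)
      = ((l - a * x) + p2 * (m - b * y)) * (m * (1 - p1 * p2) * H + p1 * (l + p2 * m) * Z) := by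
  have hker : y * (x - 1) * (l - a * x) + x * (y - 1) * (m - b * y) = 0 := by
    field_simp at hk
    linear_combination -hk
  refine mul_left_cancel₀ (mul_ne_zero hy (sub_one_ne_zero_of_norm_lt_one hx1)) ?_
  linear_combination (1 - p1 * p2) * (m - b * y) * F * hker
    - (1 - p1 * p2) * (m - b * y) * h
    + (p1 * (l * (1 - p1 * p2) * G + (p1 * p2 * l + p2 * m) * Z)
      - (m * (1 - p1 * p2) * H + p1 * (l + p2 * m) * Z)) * hker

/-- The boundary generating functions of an invariant distribution at `0` and `1`. -/
lemma drift_eq_mul_exp_ellipseInt {l m a b p1 p2 r : ℝ} {π : ℕ × ℕ → ℝ} (ha : 0 < a) (hal : a < l)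
    (hb : 0 < b) (hbm : b < m) (hp1 : 0 ≤ p1) (hp2 : 0 ≤ p2) (hr0 : 0 < r) (hr : b * r ^ 2 = m)
    (h0 : ∀ k, 0 ≤ π k) (hsum : ∑' k, π k = 1)
    (hbal : ∀ m1 m2 : ℕ,
      π (m1, m2) * (a + b
        + (l + p2 * m * (if m2 = 0 then 1 else 0)) * (if 0 < m1 then 1 else 0)
        + (m + p1 * l * (if m1 = 0 then 1 else 0)) * (if 0 < m2 then 1 else 0))
      = a * π (m1 - 1, m2) * (if 0 < m1 then 1 else 0)
        + b * π (m1, m2 - 1) * (if 0 < m2 then 1 else 0)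
        + (l + p2 * m * (if m2 = 0 then 1 else 0)) * π (m1 + 1, m2)
        + (m + p1 * l * (if m1 = 0 then 1 else 0)) * π (m1, m2 + 1)) :
    (l : ℂ) + m * p2 - (a + b * p2) = (l + m * p2) * π (0, 0)
      * exp (ellipseInt b m r (logCoupling a l b m p1 p2) (b + m)) := by
  have hs : Summable π := by
    by_contra h
    rw [tsum_eq_zero_of_not_summable h] at hsum
    exact zero_ne_one hsum
  have z : ‖(0 : ℂ)‖ ≤ 1 := by simp
  have o : ‖(1 : ℂ)‖ ≤ 1 := by simp
  have hfe : ∀ x y : ℂ, ‖x‖ ≤ 1 → ‖y‖ ≤ 1 → _ := fun x y hx hy =>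
    genFun_functional_equation h0 hs hbal hx hy
  have h11 : genFun π 1 1 = 1 := by rw [genFun_one_one, hsum, ofReal_one]
  have h00 := genFun_zero_zero π
  have hG : (l - a * 1) * genFun π 1 1
      = l * genFun π 0 1 - p2 * m * (genFun π 1 0 - genFun π 0 0) :=
    eq_at_one_of_mul_sub_one_eq (f := fun x : ℂ => (l - a * x) * genFun π x 1)
      (g := fun x : ℂ => l * genFun π 0 1 - p2 * m * (genFun π x 0 - genFun π 0 0))
      (ContinuousOn.mul (by fun_prop) (continuousOn_genFun_left h0 hs o))
      (continuousOn_const.sub (continuousOn_const.mul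
        ((continuousOn_genFun_left h0 hs z).sub continuousOn_const)))
      fun x hx => by linear_combination hfe x 1 hx.le o
  have hH : (m - b * 1) * genFun π 1 1
      = m * genFun π 1 0 - p1 * l * (genFun π 0 1 - genFun π 0 0) :=
    eq_at_one_of_mul_sub_one_eq (f := fun y : ℂ => (m - b * y) * genFun π 1 y)
      (g := fun y : ℂ => m * genFun π 1 0 - p1 * l * (genFun π 0 y - genFun π 0 0))
      (ContinuousOn.mul (by fun_prop) (continuousOn_genFun_right h0 hs o))
      (continuousOn_const.sub (continuousOn_const.mul
        ((continuousOn_genFun_right h0 hs z).sub continuousOn_const)))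
      fun y hy => by linear_combination hfe 1 y o hy.le
  have key := eq_mul_exp_ellipseInt ha hal hb hbm hp1 hp2 hr0 hr
    (Φ := fun y => l * (1 - p1 * p2) * genFun π 0 y + (p1 * p2 * l + p2 * m) * genFun π 0 0)
    (Ψ := fun x => m * (1 - p1 * p2) * genFun π x 0 + p1 * (l + p2 * m) * genFun π 0 0)
    (((differentiableOn_genFun_right h0 hs z).const_mul _).add_const _)
    ((continuousOn_const.mul (continuousOn_genFun_right h0 hs z)).add continuousOn_const)
    (((differentiableOn_genFun_left h0 hs z).const_mul _).add_const _)
    ((continuousOn_const.mul (continuousOn_genFun_left h0 hs z)).add continuousOn_const)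
    fun x y hx hy hx1 hy1 hk => boundary_relation hx hy hx1 hk (hfe x y hx1.le hy1.le)
  simp only [h00, h11] at key hG hH
  rw [show ((l : ℂ) + m * p2) * π (0, 0)
      = l * (1 - p1 * p2) * π (0, 0) + (p1 * p2 * l + p2 * m) * π (0, 0) by ring, ← key]
  linear_combination hG + p2 * hH

/-- The smaller root of `a x² - w x + l` for real `w`. -/
noncomputable def realSmallRoot (a l w : ℝ) : ℝ := (w - √(w ^ 2 - 4 * a * l)) / (2 * a)

lemma realSmallRoot_spec {a l w : ℝ} (ha : 0 < a) (hl : 0 < l) (hw0 : 0 < w)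
    (hw : 4 * a * l < w ^ 2) :
    0 < realSmallRoot a l w ∧ a * realSmallRoot a l w ^ 2 - w * realSmallRoot a l w + l = 0 ∧
      a * realSmallRoot a l w ^ 2 < l ∧ HasDerivAt (realSmallRoot a l)
        (realSmallRoot a l w ^ 2 / (a * realSmallRoot a l w ^ 2 - l)) w := by
  have hD : 0 < w ^ 2 - 4 * a * l := by linarith
  have hs := Real.sqrt_pos.2 hD
  have hsq := Real.sq_sqrt hD.le
  have hlt : √(w ^ 2 - 4 * a * l) < w := by
    rw [Real.sqrt_lt' hw0]
    nlinarith [mul_pos ha hl]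
  have hpos : 0 < realSmallRoot a l w := div_pos (by linarith) (by linarith)
  have hx : 2 * a * realSmallRoot a l w = w - √(w ^ 2 - 4 * a * l) := by
    unfold realSmallRoot
    field_simp
  have hroot : a * realSmallRoot a l w ^ 2 - w * realSmallRoot a l w + l = 0 := by
    refine mul_left_cancel₀ (mul_ne_zero four_ne_zero ha.ne') ?_
    linear_combination (2 * a * realSmallRoot a l w - w - √(w ^ 2 - 4 * a * l)) * hx + hsq
  have hdiff : a * realSmallRoot a l w ^ 2 - l
      = -(realSmallRoot a l w * √(w ^ 2 - 4 * a * l)) := by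
    linear_combination realSmallRoot a l w * hx - hroot
  refine ⟨hpos, hroot, by nlinarith [mul_pos hpos hs], ?_⟩
  have hd : HasDerivAt (fun w : ℝ => w ^ 2 - 4 * a * l) (2 * w) w := by
    simpa using (hasDerivAt_pow 2 w).sub_const (4 * a * l)
  refine (((hasDerivAt_id w).sub (hd.sqrt hD.ne')).div_const (2 * a)).congr_deriv ?_
  rw [hdiff]
  have h0 := hpos.ne'
  have h1 := hs.ne'
  field_simp
  linear_combination hx

lemma smallRoot_ofReal {a l w x : ℝ} (ha : 0 < a) (hl : 0 < l) (hx : 0 < x) (hxl : a * x ^ 2 < l)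
    (h : a * x ^ 2 - w * x + l = 0) : smallRoot a l w = x := by
  have hw : (w : ℂ) = a * x + l / x := by
    have : w = a * x + l / x := by field_simp; linear_combination -h
    rw [this]
    push_cast
    ring
  rw [hw]
  refine smallRoot_add_div ha hl (by exact_mod_cast hx.ne') ?_
  rwa [norm_real, Real.norm_of_nonneg hx.le]

lemma arg_eq_arctan {z : ℂ} (hz : 0 < z.re) : arg z = Real.arctan (z.im / z.re) := by
  have h := abs_lt.1 (abs_arg_lt_pi_div_two_iff.2 (Or.inl hz))
  rw [← tan_arg, Real.arctan_tan (by linarith [h.1]) h.2]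

/-- The denominator in the tangent of the argument of the coupling ratio. -/
noncomputable def couplingDenom (a l b m p1 p2 x : ℝ) : ℝ :=
  (1 - p1 * p2) * (a * x ^ 2 - (l + m + a + b) * x + l)
    - 2 * (p1 * a * (1 - p2) * x ^ 2
      + (p1 * p2 * (a + b) - (1 - p2) * (m + l * p1)) * x - p2 * (m + l * p1))

/-- The argument of the coupling ratio as a function of the real root `x` of the kernel. -/
noncomputable def couplingAngle (a l b m p1 p2 x : ℝ) : ℝ :=
  Real.arctan ((1 - p1 * p2)
    * √(-((a * x ^ 2 - (l + m + a + b) * x + l) ^ 2 - 4 * b * m * x ^ 2))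
    / couplingDenom a l b m p1 p2 x)

/-- The argument of the coupling ratio at a real `x` and `y` on the circle `b |y|² = m`. -/
lemma arg_couplingRatio {a l b m p1 p2 x : ℝ} {y : ℂ} (ha : 0 < a) (hal : a < l) (hb : 0 < b)
    (hbm : b < m) (hp1 : 0 ≤ p1) (hp2 : 0 ≤ p2) (hx : 0 < x) (hxl : a * x ^ 2 < l)
    (hy : b * ‖y‖ ^ 2 = m) (him : 0 ≤ y.im)
    (hk : a * x ^ 2 - (l + m + a + b - 2 * b * y.re) * x + l = 0) :
    0 < couplingDenom a l b m p1 p2 x ∧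
    arg (couplingRatio a l b m p1 p2 x y) = couplingAngle a l b m p1 p2 x := by
  set D := couplingDenom a l b m p1 p2 x with hD
  have hα : 0 < l - a * x := by
    have := re_sub_pos ha hal (x := (x : ℂ)) (by rw [norm_real, Real.norm_of_nonneg hx.le]; linarith)
    simpa using this
  have hβ : 0 < m - b * y.re := by
    have := re_sub_pos hb hbm hy.le
    simpa using this
  have hn : b * (y.re ^ 2 + y.im ^ 2) = m := by
    rw [← hy, Complex.sq_norm, normSq_apply]
    ring
  have hRe : 2 * x * ((l - a * x + p2 * (m - b * y.re)) * (m - b * y.re + p1 * (l - a * x))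
      + p2 * (b * y.im) ^ 2) = (l - a * x) * D := by
    rw [hD, couplingDenom]
    linear_combination 2 * x * p2 * b * hn - ((l - a * x) * (1 + p1 * p2) + 2 * p2 * m) * hk
  have hRe0 : 0 < (l - a * x + p2 * (m - b * y.re)) * (m - b * y.re + p1 * (l - a * x))
      + p2 * (b * y.im) ^ 2 := by positivity
  have hDpos : 0 < D := by
    by_contra h
    rw [not_lt] at h
    nlinarith
  refine ⟨hDpos, ?_⟩
  have hsqrt : √(-((a * x ^ 2 - (l + m + a + b) * x + l) ^ 2 - 4 * b * m * x ^ 2))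
      = 2 * b * x * y.im := by
    rw [show -((a * x ^ 2 - (l + m + a + b) * x + l) ^ 2 - 4 * b * m * x ^ 2)
        = (2 * b * x * y.im) ^ 2 by
      linear_combination (2 * b * y.re * x - (a * x ^ 2 - (l + m + a + b) * x + l)) * hk
        - 4 * b * x ^ 2 * hn]
    exact Real.sqrt_sq (by positivity)
  have hN : 0 < (m - b * y.re + p1 * (l - a * x)) ^ 2 + (b * y.im) ^ 2 := by positivity
  have hPre : ((l : ℂ) - a * x + p2 * (m - b * y)).re = l - a * x + p2 * (m - b * y.re) := by simp
  have hPim : ((l : ℂ) - a * x + p2 * (m - b * y)).im = -(p2 * (b * y.im)) := by simp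
  have hQre : ((m : ℂ) - b * y + p1 * (l - a * x)).re = m - b * y.re + p1 * (l - a * x) := by simp
  have hQim : ((m : ℂ) - b * y + p1 * (l - a * x)).im = -(b * y.im) := by simp
  have hre : (couplingRatio a l b m p1 p2 x y).re
      = ((l - a * x + p2 * (m - b * y.re)) * (m - b * y.re + p1 * (l - a * x))
      + p2 * (b * y.im) ^ 2) / ((m - b * y.re + p1 * (l - a * x)) ^ 2 + (b * y.im) ^ 2) := by
    rw [couplingRatio, div_re, normSq_apply, hPre, hPim, hQre, hQim]
    ring
  have himm : (couplingRatio a l b m p1 p2 x y).im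
      = ((1 - p1 * p2) * (l - a * x) * b * y.im)
        / ((m - b * y.re + p1 * (l - a * x)) ^ 2 + (b * y.im) ^ 2) := by
    rw [couplingRatio, div_im, normSq_apply, hPre, hPim, hQre, hQim]
    ring
  rw [arg_eq_arctan (by rw [hre]; positivity), hre, himm, div_div_div_cancel_right₀ hN.ne',
    couplingAngle, hsqrt]
  congr 1
  rw [div_eq_div_iff hRe0.ne' hDpos.ne']
  linear_combination -(1 - p1 * p2) * b * y.im * hRe

lemma div_eq_mul_conj {b m r : ℝ} (hr0 : 0 < r) (hr : b * r ^ 2 = m) {y : ℂ} (hy : ‖y‖ = r) :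
    m / y = b * (starRingEnd ℂ) y := by
  have h0 : y ≠ 0 := norm_pos_iff.1 (hy ▸ hr0)
  rw [div_eq_iff h0, mul_assoc, mul_comm ((starRingEnd ℂ) _), mul_conj, normSq_eq_norm_sq, hy,
    ← hr]
  push_cast
  ring

lemma mul_add_div_eq_ofReal {b m r : ℝ} (hr0 : 0 < r) (hr : b * r ^ 2 = m) {y : ℂ}
    (hy : ‖y‖ = r) : b * y + m / y = (2 * b * y.re : ℝ) := by
  rw [div_eq_mul_conj hr0 hr hy, ← mul_add, add_conj]
  push_cast
  ring

/-- The ellipse integral of a function symmetric under conjugation, at a real point, over the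
circle on which `b ζ + m / ζ` is real. -/
lemma ellipseInt_eq_ofReal {b m r w : ℝ} (hr0 : 0 < r) (hr : b * r ^ 2 = m)
    (hw : ∀ t, 2 * b * r * Real.cos t < w) {f : ℂ → ℂ}
    (hf : ContinuousOn f (sphere 0 r))
    (hconj : ∀ ζ : ℂ, ‖ζ‖ = r → f ((starRingEnd ℂ) ζ) = (starRingEnd ℂ) (f ζ)) :
    ellipseInt b m r f w = ((1 / Real.pi * ∫ t in (0 : ℝ)..Real.pi,
      (f (circleMap 0 r t)).im * (2 * b * r * Real.sin t / (w - 2 * b * r * Real.cos t)) : ℝ) : ℂ)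
      := by
  set k : ℝ → ℝ := fun t => 2 * b * r * Real.sin t / (w - 2 * b * r * Real.cos t) with hk
  have hkc : Continuous k := by
    refine Continuous.div (by fun_prop) (by fun_prop) fun t => ?_
    linarith [hw t]
  have hfc := continuous_comp_circleMap hr0.le hf
  have hintegrand : ∀ t : ℝ, (deriv (circleMap 0 r) t * (f (circleMap 0 r t)
      * (b - m / circleMap 0 r t ^ 2))) / (b * circleMap 0 r t + m / circleMap 0 r t - w)
      = f (circleMap 0 r t) * (k t : ℂ) := by
    intro t
    have h0 : circleMap 0 r t ≠ 0 := circleMap_ne_center hr0.ne'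
    have hn : ‖circleMap 0 r t‖ = r := by rw [norm_circleMap_zero, abs_of_pos hr0]
    have h1 := div_eq_mul_conj hr0 hr hn
    have h2 : (b : ℂ) * circleMap 0 r t + m / circleMap 0 r t = (2 * b * r * Real.cos t : ℝ) := by
      rw [mul_add_div_eq_ofReal hr0 hr hn, circleMap_zero_re, mul_assoc (2 * b)]
    have h3 : deriv (circleMap 0 r) t * (b - m / circleMap 0 r t ^ 2)
        = (-(2 * b * r * Real.sin t) : ℝ) := by
      rw [deriv_circleMap]
      have : circleMap 0 r t * I * (b - m / circleMap 0 r t ^ 2)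
          = I * (b * (circleMap 0 r t - (starRingEnd ℂ) (circleMap 0 r t))) := by
        rw [mul_sub (b : ℂ), ← h1]
        field_simp
      rw [this, sub_conj, circleMap_zero_im]
      push_cast
      linear_combination (2 * b * r * Complex.sin t) * I_sq
    rw [h2, show deriv (circleMap 0 r) t * (f (circleMap 0 r t) * (b - m / circleMap 0 r t ^ 2))
      = f (circleMap 0 r t) * (deriv (circleMap 0 r) t * (b - m / circleMap 0 r t ^ 2)) by ring,
      h3, mul_div_assoc, ← ofReal_sub, ← ofReal_div, hk]
    congr 2
    rw [neg_div, ← div_neg, neg_sub]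
  have hsymm : ∀ t : ℝ, f (circleMap 0 r (2 * Real.pi - t)) * (k (2 * Real.pi - t) : ℂ)
      = -((starRingEnd ℂ) (f (circleMap 0 r t)) * (k t : ℂ)) := by
    intro t
    have h1 : circleMap 0 r (2 * Real.pi - t) = (starRingEnd ℂ) (circleMap 0 r t) := by
      apply Complex.ext
      · rw [conj_re, circleMap_zero_re, circleMap_zero_re, Real.cos_two_pi_sub]
      · rw [conj_im, circleMap_zero_im, circleMap_zero_im, Real.sin_two_pi_sub, mul_neg]
    have h2 : k (2 * Real.pi - t) = -k t := by
      simp only [hk, Real.cos_two_pi_sub, Real.sin_two_pi_sub, mul_neg, neg_div]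
    rw [h1, h2, hconj _ (by rw [norm_circleMap_zero, abs_of_pos hr0]), ofReal_neg, mul_neg]
  have hI : Continuous fun t : ℝ => f (circleMap 0 r t) * (k t : ℂ) :=
    hfc.mul (continuous_ofReal.comp hkc)
  have hI' : Continuous fun t : ℝ => (starRingEnd ℂ) (f (circleMap 0 r t)) * (k t : ℂ) :=
    (continuous_conj.comp hfc).mul (continuous_ofReal.comp hkc)
  have hsplit : ∫ t in (0 : ℝ)..2 * Real.pi, f (circleMap 0 r t) * (k t : ℂ)
      = 2 * I * ((∫ t in (0 : ℝ)..Real.pi, (f (circleMap 0 r t)).im * k t : ℝ) : ℂ) := by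
    rw [← intervalIntegral.integral_add_adjacent_intervals (hI.intervalIntegrable 0 Real.pi)
      (hI.intervalIntegrable _ _)]
    have h1 := intervalIntegral.integral_comp_sub_left (a := 0) (b := Real.pi)
      (fun t : ℝ => f (circleMap 0 r t) * (k t : ℂ)) (2 * Real.pi)
    rw [show 2 * Real.pi - Real.pi = Real.pi by ring, sub_zero] at h1
    rw [← h1, ← intervalIntegral.integral_ofReal, ← intervalIntegral.integral_const_mul]
    simp only [hsymm]
    rw [intervalIntegral.integral_neg, ← sub_eq_add_neg,
      ← intervalIntegral.integral_sub (hI.intervalIntegrable _ _) (hI'.intervalIntegrable _ _)]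
    congr 1
    ext t
    rw [← sub_mul, sub_conj]
    push_cast
    ring
  rw [ellipseInt_eq]
  simp only [hintegrand]
  rw [hsplit]
  have hpi : (Real.pi : ℂ) ≠ 0 := by exact_mod_cast Real.pi_ne_zero
  generalize ∫ t in (0 : ℝ)..Real.pi, (f (circleMap 0 r t)).im * k t = J
  push_cast
  field_simp

lemma realSmallRoot_arg_bounds {a l b m r c : ℝ} (ha : 0 < a) (hal : a < l) (hb : 0 < b)
    (hbm : b < m) (hr0 : 0 < r) (hr : b * r ^ 2 = m) (hc : c ≤ r) :
    2 * b * c < b + m ∧ 0 < l + m + a + b - 2 * b * c ∧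
      4 * a * l < (l + m + a + b - 2 * b * c) ^ 2 ∧
      2 * √(a * l) < l + m + a + b - 2 * b * c := by
  have h1 : 2 * b * r < b + m := by
    have hr1 : r ≠ 1 := by
      rintro rfl
      linarith
    nlinarith [mul_pos hb (sq_pos_of_ne_zero (sub_ne_zero.2 hr1))]
  have h2 : 2 * b * c ≤ 2 * b * r := by gcongr
  have h3 := two_mul_sqrt_lt_add ha hal
  refine ⟨by linarith, by linarith, ?_, by linarith⟩
  have h4 : (a + l) ^ 2 ≤ (l + m + a + b - 2 * b * c) ^ 2 :=
    pow_le_pow_left₀ (by linarith) (by linarith) 2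
  nlinarith [sq_pos_of_pos (sub_pos.2 hal)]

lemma logCoupling_of_norm_eq {a l b m p1 p2 r : ℝ} (ha : 0 < a) (hal : a < l) (hb : 0 < b)
    (hbm : b < m) (hr0 : 0 < r) (hr : b * r ^ 2 = m) {y : ℂ} (hy : ‖y‖ = r) :
    logCoupling a l b m p1 p2 y = log (couplingRatio a l b m p1 p2
      (realSmallRoot a l (l + m + a + b - 2 * b * y.re)) y) := by
  obtain ⟨-, hw0, hw, -⟩ := realSmallRoot_arg_bounds ha hal hb hbm hr0 hr (hy ▸ re_le_norm y)
  obtain ⟨h1, h2, h3, -⟩ := realSmallRoot_spec ha (ha.trans hal) hw0 hw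
  rw [logCoupling, mul_add_div_eq_ofReal hr0 hr hy, ← smallRoot_ofReal ha (ha.trans hal) h1 h3 h2]
  push_cast
  rfl

lemma continuousOn_logCoupling_sphere {a l b m p1 p2 r : ℝ} (ha : 0 < a) (hal : a < l)
    (hb : 0 < b) (hbm : b < m) (hp1 : 0 ≤ p1) (hp2 : 0 ≤ p2) (hr0 : 0 < r) (hr : b * r ^ 2 = m) :
    ContinuousOn (logCoupling a l b m p1 p2) (sphere 0 r) := fun y hy => by
  rw [mem_sphere_zero_iff_norm] at hy
  have hw := (realSmallRoot_arg_bounds ha hal hb hbm hr0 hr (hy ▸ re_le_norm y)).2.2.2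
  refine (differentiableAt_logCoupling ha hal hb hbm hp1 hp2 (norm_pos_iff.1 (hy ▸ hr0))
    (hy ▸ hr.le) (focalSum_of_re_le ?_)).continuousAt.continuousWithinAt
  rw [mul_add_div_eq_ofReal hr0 hr hy]
  simpa using hw

lemma logCoupling_conj {a l b m p1 p2 r : ℝ} (ha : 0 < a) (hal : a < l) (hb : 0 < b)
    (hbm : b < m) (hp1 : 0 ≤ p1) (hp2 : 0 ≤ p2) (hr0 : 0 < r) (hr : b * r ^ 2 = m) {y : ℂ}
    (hy : ‖y‖ = r) : logCoupling a l b m p1 p2 ((starRingEnd ℂ) y)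
      = (starRingEnd ℂ) (logCoupling a l b m p1 p2 y) := by
  obtain ⟨-, hw0, hw, -⟩ := realSmallRoot_arg_bounds ha hal hb hbm hr0 hr (hy ▸ re_le_norm y)
  obtain ⟨h1, h2, h3, -⟩ := realSmallRoot_spec ha (ha.trans hal) hw0 hw
  rw [logCoupling_of_norm_eq ha hal hb hbm hr0 hr hy,
    logCoupling_of_norm_eq ha hal hb hbm hr0 hr (by rwa [norm_conj]), conj_re,
    ← log_conj _ (slitPlane_arg_ne_pi (couplingRatio_mem_slitPlane ha hal hb hbm hp1 hp2
      (by rw [norm_real, Real.norm_of_nonneg h1.le]; exact h3.le) (hy ▸ hr.le)))]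
  simp [couplingRatio]

lemma continuousAt_integrand {a l b m p1 p2 x : ℝ} (hx : x ≠ 0)
    (hD : couplingDenom a l b m p1 p2 x ≠ 0) (hk : (x - 1) * (l - a * x) ≠ 0) :
    ContinuousAt (fun x => (a * x ^ 2 - l) * couplingAngle a l b m p1 p2 x
      / (x * ((x - 1) * (l - a * x)))) x := by
  have hDc : Continuous (couplingDenom a l b m p1 p2) := by unfold couplingDenom; fun_prop
  have hA : ContinuousAt (couplingAngle a l b m p1 p2) x :=
    Real.continuous_arctan.continuousAt.comp
      (ContinuousAt.div (by fun_prop) hDc.continuousAt hD)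
  exact ContinuousAt.div (by fun_prop) (by fun_prop) (mul_ne_zero hx hk)

/-- The ellipse integral of the coupling as a real integral in the variable `x`. -/
lemma ellipseInt_logCoupling {a l b m p1 p2 r : ℝ} (ha : 0 < a) (hal : a < l)
    (hb : 0 < b) (hbm : b < m) (hp1 : 0 ≤ p1) (hp2 : 0 ≤ p2) (hr0 : 0 < r) (hr : b * r ^ 2 = m) :
    ellipseInt b m r (logCoupling a l b m p1 p2) (b + m)
      = ((1 / Real.pi * ∫ x in realSmallRoot a l (l + m + a + b + 2 * b * r)..
          realSmallRoot a l (l + m + a + b - 2 * b * r),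
        (a * x ^ 2 - l) * couplingAngle a l b m p1 p2 x / (x * ((x - 1) * (l - a * x))) : ℝ) : ℂ)
      := by
  have hcos : ∀ t, r * Real.cos t ≤ r := fun t => by nlinarith [Real.cos_le_one t]
  have hbd := fun t => realSmallRoot_arg_bounds ha hal hb hbm hr0 hr (hcos t)
  have hsp := fun t => realSmallRoot_spec ha (ha.trans hal) (hbd t).2.1 (hbd t).2.2.1
  set w : ℝ → ℝ := fun t => l + m + a + b - 2 * b * (r * Real.cos t) with hw
  set X : ℝ → ℝ := fun t => realSmallRoot a l (w t) with hX
  set X' : ℝ → ℝ := fun t => X t ^ 2 / (a * X t ^ 2 - l) * (2 * b * r * Real.sin t) with hX'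
  set g : ℝ → ℝ := fun x => (a * x ^ 2 - l) * couplingAngle a l b m p1 p2 x
    / (x * ((x - 1) * (l - a * x))) with hg
  have hderiv : ∀ t, HasDerivAt X (X' t) t := by
    intro t
    have h1 : HasDerivAt w (2 * b * r * Real.sin t) t :=
      (((Real.hasDerivAt_cos t).const_mul r).const_mul (2 * b)).const_sub (l + m + a + b)
        |>.congr_deriv (by ring)
    exact (hsp t).2.2.2.comp t h1
  have hXc : Continuous X := continuous_iff_continuousAt.2 fun t => (hderiv t).continuousAt
  have hX'c : Continuous X' :=
    ((hXc.pow 2).div (by fun_prop) fun t => by linarith [(hsp t).2.2.1]).mul (by fun_prop)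
  have hnorm : ∀ t, ‖circleMap 0 r t‖ = r := fun t => by
    rw [norm_circleMap_zero, abs_of_pos hr0]
  have hker : ∀ t, (X t - 1) * (l - a * X t) = -(X t * (b + m - 2 * b * r * Real.cos t)) := by
    intro t
    linear_combination -(hsp t).2.1
  have hden : ∀ t, 0 < b + m - 2 * b * r * Real.cos t := fun t => by linarith [(hbd t).1]
  have harg : ∀ t ∈ Icc 0 Real.pi, 0 < couplingDenom a l b m p1 p2 (X t) ∧
      arg (couplingRatio a l b m p1 p2 (X t) (circleMap 0 r t))
        = couplingAngle a l b m p1 p2 (X t) := by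
    intro t ht
    refine arg_couplingRatio ha hal hb hbm hp1 hp2 (hsp t).1 (hsp t).2.2.1 (by rw [hnorm, hr]) ?_ ?_
    · rw [circleMap_zero_im]
      exact mul_nonneg hr0.le (Real.sin_nonneg_of_mem_Icc ht)
    · rw [circleMap_zero_re]
      exact (hsp t).2.1
  have hsubst : ∫ t in (0 : ℝ)..Real.pi, (g ∘ X) t * X' t = ∫ x in X 0..X Real.pi, g x := by
    refine intervalIntegral.integral_comp_mul_deriv'' hXc.continuousOn
      (fun t _ => (hderiv t).hasDerivWithinAt) hX'c.continuousOn ?_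
    rintro _ ⟨t, ht, rfl⟩
    rw [uIcc_of_le Real.pi_pos.le] at ht
    refine (continuousAt_integrand (hsp t).1.ne' (harg t ht).1.ne' ?_).continuousWithinAt
    rw [hker]
    exact neg_ne_zero.2 (mul_pos (hsp t).1 (hden t)).ne'
  have hX0 : X 0 = realSmallRoot a l (l + m + a + b - 2 * b * r) := by
    simp only [hX, hw, Real.cos_zero, mul_one]
  have hXpi : X Real.pi = realSmallRoot a l (l + m + a + b + 2 * b * r) := by
    simp only [hX, hw, Real.cos_pi, mul_neg, mul_one, sub_neg_eq_add]
  rw [← ofReal_add, ellipseInt_eq_ofReal hr0 hr (fun t => by linarith [hden t])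
    (continuousOn_logCoupling_sphere ha hal hb hbm hp1 hp2 hr0 hr)
    fun y hy => logCoupling_conj ha hal hb hbm hp1 hp2 hr0 hr hy]
  rw [← hX0, ← hXpi, intervalIntegral.integral_symm (X 0), ← hsubst,
    ← intervalIntegral.integral_neg]
  congr 2
  refine intervalIntegral.integral_congr fun t ht => ?_
  rw [uIcc_of_le Real.pi_pos.le] at ht
  rw [logCoupling_of_norm_eq ha hal hb hbm hr0 hr (hnorm t), log_im, circleMap_zero_re,
    (harg t ht).2]
  simp only [Function.comp, hg, hX']
  rw [hker]
  have h1 : X t ≠ 0 := (hsp t).1.ne'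
  have h2 := (hden t).ne'
  have h3 : a * X t ^ 2 - l ≠ 0 := by linarith [(hsp t).2.2.1]
  field_simp

lemma realSmallRoot_eq {a l w x : ℝ} (ha : 0 < a) (hl : 0 < l) (hw0 : 0 < w)
    (hw : 4 * a * l < w ^ 2) (hx : 0 < x) (hxl : a * x ^ 2 < l)
    (h : a * x ^ 2 - w * x + l = 0) : realSmallRoot a l w = x := by
  obtain ⟨h1, h2, h3, -⟩ := realSmallRoot_spec ha hl hw0 hw
  have := (smallRoot_ofReal ha hl h1 h3 h2).symm.trans (smallRoot_ofReal ha hl hx hxl h)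
  exact_mod_cast this

/-- The branch points of the kernel as values of `realSmallRoot`. -/
lemma branch_points_eq {a l b m r x1 x2 : ℝ} (ha : 0 < a) (hal : a < l) (hb : 0 < b)
    (hbm : b < m) (hr0 : 0 < r) (hr : b * r ^ 2 = m) (hx1 : 0 < x1) (hx12 : x1 < x2)
    (hx2 : x2 < 1)
    (h1 : (a * x1 ^ 2 - (l + m + a + b) * x1 + l) ^ 2 - 4 * b * m * x1 ^ 2 = 0)
    (h2 : (a * x2 ^ 2 - (l + m + a + b) * x2 + l) ^ 2 - 4 * b * m * x2 ^ 2 = 0) :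
    realSmallRoot a l (l + m + a + b + 2 * b * r) = x1 ∧
      realSmallRoot a l (l + m + a + b - 2 * b * r) = x2 := by
  have hl := ha.trans hal
  have hroot : ∀ x, (a * x ^ 2 - (l + m + a + b) * x + l) ^ 2 - 4 * b * m * x ^ 2 = 0 →
      a * x ^ 2 - (l + m + a + b + 2 * b * r) * x + l = 0 ∨
        a * x ^ 2 - (l + m + a + b - 2 * b * r) * x + l = 0 := by
    intro x h
    rw [← mul_eq_zero]
    linear_combination h - 4 * b * x ^ 2 * hr
  have hsmall : ∀ x, 0 < x → x < 1 → a * x ^ 2 < l := by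
    intro x h h'
    nlinarith [pow_le_one₀ h.le h'.le (n := 2)]
  obtain ⟨-, hw0, hw, -⟩ := realSmallRoot_arg_bounds ha hal hb hbm hr0 hr (le_refl r)
  obtain ⟨-, hv0, hv, -⟩ := realSmallRoot_arg_bounds ha hal hb hbm hr0 hr (c := -r) (by linarith)
  rw [mul_neg, sub_neg_eq_add] at hv0 hv
  have hx2' := hx1.trans hx12
  have hx1' := hx12.trans hx2
  have e := fun x h h' => realSmallRoot_eq ha hl hv0 hv h (hsmall x h h')
  have e' := fun x h h' => realSmallRoot_eq ha hl hw0 hw h (hsmall x h h')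
  rcases hroot x1 h1 with k1 | k1 <;> rcases hroot x2 h2 with k2 | k2
  · exact absurd ((e x1 hx1 hx1' k1).symm.trans (e x2 hx2' hx2 k2)) hx12.ne
  · exact ⟨e x1 hx1 hx1' k1, e' x2 hx2' hx2 k2⟩
  · have h3 : (x2 - x1) * (l - a * x1 * x2) + 4 * b * r * x1 * x2 = 0 := by
      linear_combination x2 * k1 - x1 * k2
    have h4 : 0 < l - a * x1 * x2 := by nlinarith [hsmall x2 hx2' hx2, mul_pos ha hx2']
    have h5 := mul_pos (sub_pos.2 hx12) h4
    have h6 : 0 < 4 * b * r * x1 * x2 := by positivity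
    linarith
  · exact absurd ((e' x1 hx1 hx1' k1).symm.trans (e' x2 hx2' hx2 k2)) hx12.ne

end KernelMethod

theorem stmt16 (la1 la2 mu1 mu2 c1 c2 p1 p2 x1 x2 : ℝ)
    (hla1 : 0 < la1) (hla2 : 0 < la2) (hmu1 : 0 < mu1) (hmu2 : 0 < mu2)
    (hc1 : 0 < c1) (hc2 : 0 < c2)
    (hp1 : 0 ≤ p1) (hp1' : p1 ≤ 1) (hp2 : 0 ≤ p2) (hp2' : p2 ≤ 1)
    (hE1 : mu1 * c1 < la1) (hE2 : mu2 * c2 < la2) (hp : p1 * p2 < 1)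
    (hx1 : 0 < x1) (hx12 : x1 < x2) (hx2 : x2 < 1)
    (hD1 : Delta2 la1 la2 mu1 mu2 c1 c2 x1 = 0)
    (hD2 : Delta2 la1 la2 mu1 mu2 c1 c2 x2 = 0)
    (hDneg : ∀ x ∈ Set.Ioo x1 x2, Delta2 la1 la2 mu1 mu2 c1 c2 x < 0)
    (π : ℕ × ℕ → ℝ) (hπ : IsInvariantDist la1 la2 mu1 mu2 c1 c2 p1 p2 π) :
    π (0, 0) = (la1 + la2 * p2 - (mu1 * c1 + mu2 * c2 * p2))
        / ((la1 + la2 * p2) * phiY1 la1 la2 mu1 mu2 c1 c2 p1 p2 x1 x2) := by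
  have ha := mul_pos hmu1 hc1
  have hb := mul_pos hmu2 hc2
  have hr0 : 0 < √(la2 / (mu2 * c2)) := Real.sqrt_pos.2 (by positivity)
  have hr : mu2 * c2 * √(la2 / (mu2 * c2)) ^ 2 = la2 := by
    rw [Real.sq_sqrt (by positivity)]
    field_simp
  rw [Delta2, mul_assoc 4] at hD1 hD2
  obtain ⟨hρ1, hρ2⟩ := branch_points_eq ha hE1 hb hE2 hr0 hr hx1 hx12 hx2 hD1 hD2
  have hphi : phiY1 la1 la2 mu1 mu2 c1 c2 p1 p2 x1 x2 = Real.exp (1 / Real.pi * ∫ x in x1..x2,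
      (mu1 * c1 * x ^ 2 - la1) * couplingAngle (mu1 * c1) la1 (mu2 * c2) la2 p1 p2 x
        / (x * ((x - 1) * (la1 - mu1 * c1 * x)))) := by
    rw [phiY1]
    congr 2
    refine intervalIntegral.integral_congr fun x _ => ?_
    simp only [ThetaY, Delta2, RY, h1r, couplingAngle, couplingDenom]
    ring_nf
  have key := drift_eq_mul_exp_ellipseInt ha hE1 hb hE2 hp1 hp2 hr0 hr hπ.1 hπ.2.1 hπ.2.2
  rw [ellipseInt_logCoupling ha hE1 hb hE2 hp1 hp2 hr0 hr, hρ1, hρ2, ← Complex.ofReal_exp,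
    ← hphi] at key
  have hkey : la1 + la2 * p2 - (mu1 * c1 + mu2 * c2 * p2)
      = (la1 + la2 * p2) * π (0, 0) * phiY1 la1 la2 mu1 mu2 c1 c2 p1 p2 x1 x2 := by
    exact_mod_cast key
  have hpos : 0 < (la1 + la2 * p2) * phiY1 la1 la2 mu1 mu2 c1 c2 p1 p2 x1 x2 :=
    mul_pos (by positivity) (Real.exp_pos _)
  rw [eq_div_iff hpos.ne', hkey]
  ring
end

section
/- Let l₁, l₂ be positive reals. If one of the following three conditions holds: (a) λ₂ < μ₂l₂ and λ₁p₁ + λ₂ > μ₁l₁p₁ + μ₂l₂; (b) λ₁ < μ₁l₁ and λ₁ + λ₂p₂ > μ₁l₁ + μ₂l₂p₂; (c) λ₁ > μ₁l₁ and λ₂ > μ₂l₂; then there exists exactly one invariant distribution of the random walk (m̄_l(t)), i.e., exactly one probability distribution π on ℕ×ℕ satisfying the balance equations. -/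
open Filter Topology

noncomputable section

/-- Foster's criterion: a positive operator `P` preserving constants and admitting a Lyapunov
function has an invariant subprobability weight charging the finite set `F`. -/
lemma exists_invariant_weight_of_lyapunov {S : Type*} [Nonempty S]
    (P : (S → ℝ) →ₗ[ℝ] (S → ℝ)) (hpos : ∀ f, 0 ≤ f → 0 ≤ P f) (hone : P 1 = 1)
    (V : S → ℝ) (hV : 0 ≤ V) (F : Finset S) {ε C : ℝ} (hε : 0 < ε) (hC : 0 < C)
    (hdrift : ∀ x, P V x ≤ V x - ε + C * (F : Set S).indicator 1 x) :
    ∃ π : S → ℝ, (∀ x, 0 ≤ π x) ∧ (∀ G : Finset S, ∑ x ∈ G, π x ≤ 1) ∧ 0 < ∑ x ∈ F, π x ∧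
      ∀ f g : S →₀ ℝ, (⇑g = P ⇑f) →
        Finsupp.linearCombination ℝ π g = Finsupp.linearCombination ℝ π f := by
  classical
  obtain ⟨x₀⟩ := ‹Nonempty S›
  have hpow_pos : ∀ k f, 0 ≤ f → 0 ≤ (P ^ k) f := by
    intro k
    induction k with
    | zero => intro f hf; simpa using hf
    | succ k ih => intro f hf; rw [pow_succ]; exact ih _ (hpos f hf)
  have hpow_mono : ∀ k f g, f ≤ g → (P ^ k) f ≤ (P ^ k) g := by
    intro k f g hfg
    have h := hpow_pos k (g - f) (sub_nonneg.2 hfg)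
    rw [map_sub] at h
    exact sub_nonneg.1 h
  have hpow_one : ∀ k, (P ^ k) 1 = 1 := by
    intro k
    induction k with
    | zero => simp
    | succ k ih => rw [pow_succ, Module.End.mul_apply, hone, ih]
  let A : ℕ → (S → ℝ) →ₗ[ℝ] ℝ := fun n =>
    ((n : ℝ) + 1)⁻¹ • ∑ k ∈ Finset.range (n + 1), (LinearMap.proj x₀) ∘ₗ (P ^ k)
  have hA : ∀ n f, A n f = ((n : ℝ) + 1)⁻¹ * ∑ k ∈ Finset.range (n + 1), (P ^ k) f x₀ := by
    intro n f; simp [A]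
  have hn : ∀ n : ℕ, (0 : ℝ) < (n : ℝ) + 1 := fun n => by positivity
  have hA_mono : ∀ n f g, f ≤ g → A n f ≤ A n g := by
    intro n f g hfg
    rw [hA, hA]
    have := (hn n).le
    gcongr with k _
    exact hpow_mono k f g hfg x₀
  have hA_one : ∀ n, A n 1 = 1 := by
    intro n
    rw [hA]
    simp only [hpow_one, Pi.one_apply, Finset.sum_const, Finset.card_range, nsmul_eq_mul, mul_one]
    push_cast
    exact inv_mul_cancel₀ (hn n).ne'
  have hA_nonneg : ∀ n f, 0 ≤ f → 0 ≤ A n f := by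
    intro n f hf
    simpa using hA_mono n 0 f hf
  have hA_shift : ∀ n f, A n (P f) - A n f = ((n : ℝ) + 1)⁻¹ * ((P ^ (n + 1)) f x₀ - f x₀) := by
    intro n f
    rw [hA, hA, ← mul_sub, ← Finset.sum_sub_distrib]
    congr 1
    have := Finset.sum_range_sub (fun k => (P ^ k) f x₀) (n + 1)
    simpa [pow_succ] using this
  let ν : ℕ → S → ℝ := fun n x => A n (Pi.single x 1)
  have hsum : ∀ n (G : Finset S), ∑ x ∈ G, ν n x = A n ((G : Set S).indicator 1) := by
    intro n G
    simp only [ν]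
    rw [← map_sum]
    congr 1
    ext y
    simp [Finset.sum_apply, Pi.single_apply, Set.indicator_apply]
  have hind_le : ∀ G : Finset S, ((G : Set S).indicator 1 : S → ℝ) ≤ 1 := fun G =>
    Set.indicator_le_self' (fun _ _ => zero_le_one)
  have hsum_le : ∀ n (G : Finset S), ∑ x ∈ G, ν n x ≤ 1 := by
    intro n G
    rw [hsum, ← hA_one n]
    exact hA_mono n _ _ (hind_le G)
  have hν_nonneg : ∀ n x, 0 ≤ ν n x := fun n x =>
    hA_nonneg n _ (Pi.single_nonneg.2 zero_le_one)
  have hν_le : ∀ n x, ν n x ≤ 1 := fun n x => by simpa using hsum_le n {x}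
  obtain ⟨π, -, hπ⟩ := (isCompact_univ_pi (fun _ : S => isCompact_Icc (a := (0 : ℝ)) (b := 1))
    ).ultrafilter_le_nhds ((hyperfilter ℕ).map ν) (by
      rw [le_principal_iff]
      exact mem_map.2 (Eventually.of_forall fun n x _ => ⟨hν_nonneg n x, hν_le n x⟩))
  have hlim : Tendsto ν (hyperfilter ℕ : Filter ℕ) (𝓝 π) := hπ
  have hlimx : ∀ x, Tendsto (fun n => ν n x) (hyperfilter ℕ : Filter ℕ) (𝓝 (π x)) :=
    fun x => (tendsto_pi_nhds.1 hlim) x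
  have hlim_sum : ∀ G : Finset S,
      Tendsto (fun n => ∑ x ∈ G, ν n x) (hyperfilter ℕ : Filter ℕ) (𝓝 (∑ x ∈ G, π x)) :=
    fun G => tendsto_finsetSum _ fun x _ => hlimx x
  have hcof : (hyperfilter ℕ : Filter ℕ) ≤ atTop := by
    rw [← Nat.cofinite_eq_atTop]; exact hyperfilter_le_cofinite
  have hinv : ∀ c : ℝ, Tendsto (fun n : ℕ => ((n : ℝ) + 1)⁻¹ * c) (hyperfilter ℕ : Filter ℕ)
      (𝓝 0) := by
    intro c
    have h := (tendsto_one_div_add_atTop_nhds_zero_nat (𝕜 := ℝ)).mul_const c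
    simp only [one_div, zero_mul] at h
    exact h.mono_left hcof
  have hA_finsupp : ∀ n (f : S →₀ ℝ), A n f = ∑ x ∈ f.support, f x * ν n x := by
    intro n f
    have : (f : S → ℝ) = ∑ x ∈ f.support, f x • (Pi.single x 1 : S → ℝ) := by
      ext y
      simp [Finset.sum_apply, Pi.single_apply]
    conv_lhs => rw [this]
    simp [ν]
  have hlim_finsupp : ∀ f : S →₀ ℝ, Tendsto (fun n => A n f) (hyperfilter ℕ : Filter ℕ)
      (𝓝 (Finsupp.linearCombination ℝ π f)) := by
    intro f
    simp only [hA_finsupp, Finsupp.linearCombination_apply, Finsupp.sum, smul_eq_mul]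
    exact tendsto_finsetSum _ fun x _ => (hlimx x).const_mul _
  refine ⟨π, fun x => ge_of_tendsto' (hlimx x) fun n => hν_nonneg n x,
    fun G => le_of_tendsto' (hlim_sum G) fun n => hsum_le n G, ?_, ?_⟩
  · have hbound : ∀ n : ℕ, (ε - ((n : ℝ) + 1)⁻¹ * V x₀) / C ≤ ∑ x ∈ F, ν n x := by
      intro n
      have h1 := hA_mono n (P V) (V - ε • 1 + C • (F : Set S).indicator 1) (by
        intro x; simpa using hdrift x)
      have h2 := hA_shift n V
      have h3 : 0 ≤ ((n : ℝ) + 1)⁻¹ * (P ^ (n + 1)) V x₀ :=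
        mul_nonneg (inv_nonneg.2 (hn n).le) (hpow_pos _ V hV x₀)
      rw [map_add, map_sub, map_smul, map_smul, hA_one, ← hsum] at h1
      simp only [smul_eq_mul] at h1
      rw [div_le_iff₀ hC]
      linarith
    have hl : Tendsto (fun n : ℕ => (ε - ((n : ℝ) + 1)⁻¹ * V x₀) / C)
        (hyperfilter ℕ : Filter ℕ) (𝓝 ((ε - 0) / C)) :=
      ((hinv (V x₀)).const_sub ε).div_const C
    have := le_of_tendsto_of_tendsto' hl (hlim_sum F) hbound
    rw [sub_zero] at this
    exact lt_of_lt_of_le (div_pos hε hC) this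
  · intro f g hgf
    have h1 := (hlim_finsupp g).sub (hlim_finsupp f)
    set M : ℝ := ∑ x ∈ f.support, |f x| with hM
    have hf_le : ∀ x, |f x| ≤ M := by
      intro x
      by_cases hx : x ∈ f.support
      · exact Finset.single_le_sum (f := fun x => |f x|) (fun _ _ => abs_nonneg _) hx
      · rw [Finsupp.notMem_support_iff.1 hx, abs_zero]
        exact Finset.sum_nonneg fun _ _ => abs_nonneg _
    have hpow_le : ∀ k, |(P ^ k) f x₀| ≤ M := by
      intro k
      have hu := hpow_mono k f (M • 1) (fun x => by simpa using (abs_le.1 (hf_le x)).2) x₀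
      have hl := hpow_mono k ((-M) • 1) f (fun x => by simpa using (abs_le.1 (hf_le x)).1) x₀
      rw [map_smul, hpow_one] at hu hl
      simp only [Pi.smul_apply, Pi.one_apply, smul_eq_mul, mul_one] at hu hl
      exact abs_le.2 ⟨hl, hu⟩
    have h2 : Tendsto (fun n => A n g - A n f) (hyperfilter ℕ : Filter ℕ) (𝓝 0) := by
      refine squeeze_zero_norm (fun n => ?_) (hinv (2 * M))
      rw [hgf, hA_shift, norm_mul, Real.norm_of_nonneg (inv_nonneg.2 (hn n).le)]
      refine mul_le_mul_of_nonneg_left ?_ (inv_nonneg.2 (hn n).le)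
      rw [Real.norm_eq_abs]
      calc _ ≤ |(P ^ (n + 1)) f x₀| + |f x₀| := abs_sub _ _
        _ ≤ 2 * M := by linarith [hpow_le (n + 1), hf_le x₀]
    exact sub_eq_zero.1 (tendsto_nhds_unique h1 h2)

/-- Total jump rate out of `m` for the nearest-neighbour walk with birth rates `a`, `b` and death
rates `r m₂`, `s m₁`. -/
def outRate (a b : ℝ) (r s : ℕ → ℝ) (m : ℕ × ℕ) : ℝ :=
  a + b + r m.2 * (if 0 < m.1 then 1 else 0) + s m.1 * (if 0 < m.2 then 1 else 0)

/-- Flow into `m` under the weight `f`. -/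
def inflow (a b : ℝ) (r s : ℕ → ℝ) (f : ℕ × ℕ → ℝ) (m : ℕ × ℕ) : ℝ :=
  a * f (m.1 - 1, m.2) * (if 0 < m.1 then 1 else 0)
    + b * f (m.1, m.2 - 1) * (if 0 < m.2 then 1 else 0)
    + r m.2 * f (m.1 + 1, m.2) + s m.1 * f (m.1, m.2 + 1)

/-- The generator of the walk, acting on functions. -/
def generator (a b : ℝ) (r s : ℕ → ℝ) : (ℕ × ℕ → ℝ) →ₗ[ℝ] (ℕ × ℕ → ℝ) where
  toFun f m := a * (f (m.1 + 1, m.2) - f m) + b * (f (m.1, m.2 + 1) - f m)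
    + r m.2 * (if 0 < m.1 then 1 else 0) * (f (m.1 - 1, m.2) - f m)
    + s m.1 * (if 0 < m.2 then 1 else 0) * (f (m.1, m.2 - 1) - f m)
  map_add' f g := by ext m; simp only [Pi.add_apply]; ring
  map_smul' c f := by ext m; simp only [Pi.smul_apply, smul_eq_mul, RingHom.id_apply]; ring

lemma generator_apply (a b : ℝ) (r s : ℕ → ℝ) (f : ℕ × ℕ → ℝ) (m : ℕ × ℕ) :
    generator a b r s f m = a * (f (m.1 + 1, m.2) - f m) + b * (f (m.1, m.2 + 1) - f m)
    + r m.2 * (if 0 < m.1 then 1 else 0) * (f (m.1 - 1, m.2) - f m)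
    + s m.1 * (if 0 < m.2 then 1 else 0) * (f (m.1, m.2 - 1) - f m) := rfl

lemma hasSum_shift_fst (g : ℕ × ℕ → ℝ) (c : ℝ) :
    HasSum (fun m : ℕ × ℕ => g m * (if 0 < m.1 then 1 else 0)) c ↔
      HasSum (fun m : ℕ × ℕ => g (m.1 + 1, m.2)) c := by
  have hinj : Function.Injective (fun m : ℕ × ℕ => (m.1 + 1, m.2)) := by
    rintro ⟨i, j⟩ ⟨k, l⟩ h
    simpa using h
  rw [← hinj.hasSum_iff]
  · simp [Function.comp_def]
  · rintro ⟨_ | i, j⟩ h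
    · simp
    · exact absurd ⟨(i, j), rfl⟩ h

lemma hasSum_shift_snd (g : ℕ × ℕ → ℝ) (c : ℝ) :
    HasSum (fun m : ℕ × ℕ => g m * (if 0 < m.2 then 1 else 0)) c ↔
      HasSum (fun m : ℕ × ℕ => g (m.1, m.2 + 1)) c := by
  have hinj : Function.Injective (fun m : ℕ × ℕ => (m.1, m.2 + 1)) := by
    rintro ⟨i, j⟩ ⟨k, l⟩ h
    simpa using h
  rw [← hinj.hasSum_iff]
  · simp [Function.comp_def]
  · rintro ⟨i, _ | j⟩ h
    · simp
    · exact absurd ⟨(i, j), rfl⟩ h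

/-- Conservation of mass: total inflow equals total outflow. -/
lemma hasSum_inflow_sub_outflow (a b : ℝ) {r s : ℕ → ℝ} {R : ℝ}
    (hr : ∀ n, 0 < r n) (hs : ∀ n, 0 < s n) (hrR : ∀ n, r n ≤ R) (hsR : ∀ n, s n ≤ R)
    {f : ℕ × ℕ → ℝ} (hf : ∀ m, 0 ≤ f m) (hsum : Summable f) :
    HasSum (fun m => inflow a b r s f m - f m * outRate a b r s m) 0 := by
  have hR : 0 ≤ R := (hr 0).le.trans (hrR 0)
  have ha := (hsum.mul_left a).hasSum
  have hb := (hsum.mul_left b).hasSum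
  have ha' := (hasSum_shift_fst (fun m => a * f (m.1 - 1, m.2)) _).2 (by simpa using ha)
  have hb' := (hasSum_shift_snd (fun m => b * f (m.1, m.2 - 1)) _).2 (by simpa using hb)
  have h1 : Summable fun m : ℕ × ℕ => (r m.2 * f m) * (if 0 < m.1 then 1 else 0) := by
    refine Summable.of_nonneg_of_le (fun m => ?_) (fun m => ?_) (hsum.mul_left R)
    · have := mul_nonneg (hr m.2).le (hf m)
      split_ifs <;> simp [this]
    · have := mul_le_mul_of_nonneg_right (hrR m.2) (hf m)
      have := mul_nonneg hR (hf m)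
      split_ifs <;> simp [*]
  have h2 : Summable fun m : ℕ × ℕ => (s m.1 * f m) * (if 0 < m.2 then 1 else 0) := by
    refine Summable.of_nonneg_of_le (fun m => ?_) (fun m => ?_) (hsum.mul_left R)
    · have := mul_nonneg (hs m.1).le (hf m)
      split_ifs <;> simp [this]
    · have := mul_le_mul_of_nonneg_right (hsR m.1) (hf m)
      have := mul_nonneg hR (hf m)
      split_ifs <;> simp [*]
  have h1' := (hasSum_shift_fst (fun m => r m.2 * f m) _).1 h1.hasSum
  have h2' := (hasSum_shift_snd (fun m => s m.1 * f m) _).1 h2.hasSum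
  have key := (((ha'.add hb').add h1').add h2').sub (((ha.add hb).add h1.hasSum).add h2.hasSum)
  rw [sub_self] at key
  refine key.congr_fun ?_
  intro m
  simp only [inflow, outRate]
  ring

lemma inflow_mono {a b : ℝ} (ha : 0 < a) (hb : 0 < b) {r s : ℕ → ℝ}
    (hr : ∀ n, 0 < r n) (hs : ∀ n, 0 < s n) {f g : ℕ × ℕ → ℝ} (hfg : ∀ m, f m ≤ g m)
    (m : ℕ × ℕ) : inflow a b r s f m ≤ inflow a b r s g m := by
  unfold inflow
  have h1 := mul_le_mul_of_nonneg_left (hfg (m.1 - 1, m.2)) ha.le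
  have h2 := mul_le_mul_of_nonneg_left (hfg (m.1, m.2 - 1)) hb.le
  have h3 := mul_le_mul_of_nonneg_left (hfg (m.1 + 1, m.2)) (hr m.2).le
  have h4 := mul_le_mul_of_nonneg_left (hfg (m.1, m.2 + 1)) (hs m.1).le
  split_ifs <;> linarith

/-- A nonnegative solution of the balance equations that vanishes somewhere vanishes everywhere. -/
lemma eq_zero_of_balance_of_eq_zero {a b : ℝ} (ha : 0 < a) (hb : 0 < b) {r s : ℕ → ℝ}
    (hr : ∀ n, 0 < r n) (hs : ∀ n, 0 < s n) {f : ℕ × ℕ → ℝ} (hf : ∀ m, 0 ≤ f m)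
    (hbal : ∀ m, f m * outRate a b r s m = inflow a b r s f m) {x : ℕ × ℕ} (hx : f x = 0) :
    ∀ m, f m = 0 := by
  have step : ∀ i j, f (i, j) = 0 →
      f (i - 1, j) = 0 ∧ f (i, j - 1) = 0 ∧ f (i + 1, j) = 0 ∧ f (i, j + 1) = 0 := by
    intro i j h
    have hb0 := hbal (i, j)
    rw [h, zero_mul] at hb0
    simp only [inflow] at hb0
    have t1 : 0 ≤ a * f (i - 1, j) * (if 0 < i then 1 else 0) :=
      mul_nonneg (mul_nonneg ha.le (hf _)) (by split_ifs <;> norm_num)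
    have t2 : 0 ≤ b * f (i, j - 1) * (if 0 < j then 1 else 0) :=
      mul_nonneg (mul_nonneg hb.le (hf _)) (by split_ifs <;> norm_num)
    have t3 : 0 ≤ r j * f (i + 1, j) := mul_nonneg (hr j).le (hf _)
    have t4 : 0 ≤ s i * f (i, j + 1) := mul_nonneg (hs i).le (hf _)
    have e1 : a * f (i - 1, j) * (if 0 < i then 1 else 0) = 0 := by linarith
    have e2 : b * f (i, j - 1) * (if 0 < j then 1 else 0) = 0 := by linarith
    have e3 : r j * f (i + 1, j) = 0 := by linarith
    have e4 : s i * f (i, j + 1) = 0 := by linarith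
    refine ⟨?_, ?_, ?_, ?_⟩
    · rcases Nat.eq_zero_or_pos i with rfl | hi
      · simpa using h
      · simpa [hi, ha.ne'] using e1
    · rcases Nat.eq_zero_or_pos j with rfl | hj
      · simpa using h
      · simpa [hj, hb.ne'] using e2
    · simpa [(hr j).ne'] using e3
    · simpa [(hs i).ne'] using e4
  have down_fst : ∀ i j, f (i, j) = 0 → f (0, j) = 0 := by
    intro i j
    induction i with
    | zero => exact id
    | succ i ih => exact fun h => ih (step _ _ h).1
  have down_snd : ∀ j, f (0, j) = 0 → f (0, 0) = 0 := by
    intro j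
    induction j with
    | zero => exact id
    | succ j ih => exact fun h => ih (step _ _ h).2.1
  have h00 : f (0, 0) = 0 := down_snd x.2 (down_fst x.1 x.2 hx)
  have up_snd : ∀ j, f (0, j) = 0 := by
    intro j
    induction j with
    | zero => exact h00
    | succ j ih => exact (step _ _ ih).2.2.2
  rintro ⟨i, j⟩
  induction i with
  | zero => exact up_snd j
  | succ i ih => exact (step _ _ ih).2.2.1

lemma le_of_balance {a b : ℝ} (ha : 0 < a) (hb : 0 < b) {r s : ℕ → ℝ} {R : ℝ}
    (hr : ∀ n, 0 < r n) (hs : ∀ n, 0 < s n) (hrR : ∀ n, r n ≤ R) (hsR : ∀ n, s n ≤ R)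
    {π ρ : ℕ × ℕ → ℝ} (hπ : HasSum π 1) (hρ : HasSum ρ 1)
    (hπbal : ∀ m, π m * outRate a b r s m = inflow a b r s π m)
    (hρbal : ∀ m, ρ m * outRate a b r s m = inflow a b r s ρ m) (m : ℕ × ℕ) : π m ≤ ρ m := by
  set f : ℕ × ℕ → ℝ := fun m => max (π m - ρ m) 0 with hfdef
  have hf : ∀ m, 0 ≤ f m := fun m => le_max_right _ _
  have hd : Summable fun m => π m - ρ m := hπ.summable.sub hρ.summable
  have hfsum : Summable f := by
    refine Summable.of_nonneg_of_le hf (fun m => ?_) hd.abs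
    exact max_le (le_abs_self _) (abs_nonneg _)
  have hdbal : ∀ m, (π m - ρ m) * outRate a b r s m = inflow a b r s (fun m => π m - ρ m) m := by
    intro m
    rw [sub_mul, hπbal, hρbal]
    simp only [inflow]
    ring
  have hnn : ∀ m, 0 ≤ inflow a b r s f m - f m * outRate a b r s m := by
    intro m
    rw [sub_nonneg]
    rcases le_total (π m - ρ m) 0 with h | h
    · have h0 : f m = 0 := max_eq_right h
      have := inflow_mono ha hb hr hs (f := fun _ => 0) hf m
      rw [h0, zero_mul]
      simpa [inflow] using this
    · have h0 : f m = π m - ρ m := max_eq_left h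
      rw [h0, hdbal]
      exact inflow_mono ha hb hr hs (fun m => le_max_left _ _) m
  have hzero := (hasSum_zero_iff_of_nonneg hnn).1
    (hasSum_inflow_sub_outflow a b hr hs hrR hsR hf hfsum)
  have hfbal : ∀ m, f m * outRate a b r s m = inflow a b r s f m := fun m =>
    (sub_eq_zero.1 (congrFun hzero m)).symm
  by_contra hlt
  have hfm : f m ≠ 0 := (lt_of_lt_of_le (sub_pos.2 (not_le.1 hlt)) (le_max_left _ _)).ne'
  have hpos : ∀ x, ρ x < π x := by
    intro x
    by_contra hx
    have : f x = 0 := max_eq_right (sub_nonpos.2 (not_lt.1 hx))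
    exact hfm (eq_zero_of_balance_of_eq_zero ha hb hr hs hf hfbal this m)
  exact (hasSum_lt (fun x => (hpos x).le) (hpos m) hρ hπ).false

/-- The adjoint action of the generator on point masses. -/
lemma generator_single (a b : ℝ) (r s : ℕ → ℝ) (m : ℕ × ℕ) :
    generator a b r s (Finsupp.single m (1 : ℝ)) =
      ⇑((-outRate a b r s m) • Finsupp.single m (1 : ℝ)
        + (a * (if 0 < m.1 then 1 else 0)) • Finsupp.single (m.1 - 1, m.2) (1 : ℝ)
        + (b * (if 0 < m.2 then 1 else 0)) • Finsupp.single (m.1, m.2 - 1) (1 : ℝ)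
        + r m.2 • Finsupp.single (m.1 + 1, m.2) (1 : ℝ)
        + s m.1 • Finsupp.single (m.1, m.2 + 1) (1 : ℝ)) := by
  classical
  obtain ⟨i, j⟩ := m
  ext ⟨k, l⟩
  simp only [generator_apply, outRate, Finsupp.add_apply, Finsupp.smul_apply, smul_eq_mul,
    Finsupp.single_apply, Prod.mk.injEq]
  have h1 : (if i = k + 1 ∧ j = l then (1 : ℝ) else 0) =
      (if 0 < i then 1 else 0) * (if i - 1 = k ∧ j = l then 1 else 0) := by
    split_ifs <;> first | omega | simp
  have h2 : (if i = k ∧ j = l + 1 then (1 : ℝ) else 0) =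
      (if 0 < j then 1 else 0) * (if i = k ∧ j - 1 = l then 1 else 0) := by
    split_ifs <;> first | omega | simp
  have h3 : r l * (if 0 < k then 1 else 0) * (if i = k - 1 ∧ j = l then (1 : ℝ) else 0) =
      r j * (if i + 1 = k ∧ j = l then 1 else 0) := by
    by_cases hjl : j = l
    · subst hjl
      split_ifs <;> first | omega | simp
    · simp [hjl]
  have h4 : s k * (if 0 < l then 1 else 0) * (if i = k ∧ j = l - 1 then (1 : ℝ) else 0) =
      s i * (if i = k ∧ j + 1 = l then 1 else 0) := by
    by_cases hik : i = k
    · subst hik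
      split_ifs <;> first | omega | simp
    · simp [hik]
  have h5 : (r l * (if 0 < k then 1 else 0) + s k * (if 0 < l then 1 else 0))
        * (if i = k ∧ j = l then (1 : ℝ) else 0) =
      (r j * (if 0 < i then 1 else 0) + s i * (if 0 < j then 1 else 0))
        * (if i = k ∧ j = l then 1 else 0) := by
    by_cases h : i = k ∧ j = l
    · obtain ⟨rfl, rfl⟩ := h; rfl
    · simp [h]
  rw [h1, h2]
  linear_combination h3 + h4 - h5

/-- A Lyapunov function whose drift is at most `K - ε (m₁ + m₂)` yields an invariant
distribution. -/
lemma exists_balance_of_drift {a b : ℝ} (ha : 0 < a) (hb : 0 < b) {r s : ℕ → ℝ} {R : ℝ}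
    (hr : ∀ n, 0 < r n) (hs : ∀ n, 0 < s n) (hrR : ∀ n, r n ≤ R) (hsR : ∀ n, s n ≤ R)
    (V : ℕ × ℕ → ℝ) (hV : 0 ≤ V) {ε K : ℝ} (hε : 0 < ε) (hK : 0 ≤ K)
    (hdrift : ∀ m : ℕ × ℕ, generator a b r s V m ≤ K - ε * ((m.1 : ℝ) + m.2)) :
    ∃ π : ℕ × ℕ → ℝ, (∀ m, 0 ≤ π m) ∧ HasSum π 1 ∧
      ∀ m, π m * outRate a b r s m = inflow a b r s π m := by
  have hR : 0 < R := (hr 0).trans_le (hrR 0)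
  set Λ : ℝ := a + b + R + R with hΛdef
  have hΛ : 0 < Λ := by positivity
  obtain ⟨N, hN⟩ := exists_nat_ge ((K + 1) / ε)
  rw [div_le_iff₀ hε] at hN
  let P : (ℕ × ℕ → ℝ) →ₗ[ℝ] (ℕ × ℕ → ℝ) := LinearMap.id + Λ⁻¹ • generator a b r s
  have hP : ∀ f m, P f m = f m + Λ⁻¹ * generator a b r s f m := fun f m => by simp [P]
  obtain ⟨w, hw0, hw1, hwF, hwinv⟩ := exists_invariant_weight_of_lyapunov P
    (by
      intro f hf m
      have hf' : ∀ m, 0 ≤ f m := hf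
      have : P f m = Λ⁻¹ * (f m * Λ + generator a b r s f m) := by
        rw [hP]; field_simp
      rw [this]
      refine mul_nonneg (inv_nonneg.2 hΛ.le) ?_
      rw [generator_apply]
      have h0 := hf' m
      have h1 := mul_nonneg ha.le (hf' (m.1 + 1, m.2))
      have h2 := mul_nonneg hb.le (hf' (m.1, m.2 + 1))
      have h3 := mul_nonneg (hr m.2).le (hf' (m.1 - 1, m.2))
      have h4 := mul_nonneg (hs m.1).le (hf' (m.1, m.2 - 1))
      have h5 := mul_le_mul_of_nonneg_left (hrR m.2) h0
      have h6 := mul_le_mul_of_nonneg_left (hsR m.1) h0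
      have h7 := mul_nonneg h0 hR.le
      split_ifs <;> nlinarith)
    (by ext m; simp [hP, generator_apply])
    V hV (Finset.range (N + 1) ×ˢ Finset.range (N + 1)) (ε := Λ⁻¹) (C := Λ⁻¹ * (K + 1))
    (by positivity) (by positivity)
    (by
      intro m
      rw [hP]
      have hd := hdrift m
      have hΛ' : 0 ≤ Λ⁻¹ := (inv_pos.2 hΛ).le
      have hm1 : (0 : ℝ) ≤ m.1 := Nat.cast_nonneg _
      have hm2 : (0 : ℝ) ≤ m.2 := Nat.cast_nonneg _
      by_cases hm : m ∈ Finset.range (N + 1) ×ˢ Finset.range (N + 1)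
      · rw [Set.indicator_of_mem (Finset.mem_coe.2 hm), Pi.one_apply]
        have : generator a b r s V m ≤ K := by nlinarith
        have := mul_le_mul_of_nonneg_left this hΛ'
        linarith
      · rw [Set.indicator_of_notMem (by simpa using hm)]
        have hNm : (N : ℝ) ≤ (m.1 : ℝ) + m.2 := by
          rw [Finset.mem_product, Finset.mem_range, Finset.mem_range] at hm
          have : N ≤ m.1 + m.2 := by omega
          exact_mod_cast this
        have : generator a b r s V m ≤ -1 := by nlinarith
        have := mul_le_mul_of_nonneg_left this hΛ'
        linarith)
  have hwbal : ∀ m, w m * outRate a b r s m = inflow a b r s w m := by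
    intro m
    have h := hwinv (Finsupp.single m 1) (Finsupp.single m (1 : ℝ)
      + Λ⁻¹ • ((-outRate a b r s m) • Finsupp.single m (1 : ℝ)
        + (a * (if 0 < m.1 then 1 else 0)) • Finsupp.single (m.1 - 1, m.2) (1 : ℝ)
        + (b * (if 0 < m.2 then 1 else 0)) • Finsupp.single (m.1, m.2 - 1) (1 : ℝ)
        + r m.2 • Finsupp.single (m.1 + 1, m.2) (1 : ℝ)
        + s m.1 • Finsupp.single (m.1, m.2 + 1) (1 : ℝ))) (by
      rw [Finsupp.coe_add, Finsupp.coe_smul, ← generator_single]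
      rfl)
    simp only [map_add, map_smul, Finsupp.linearCombination_single, smul_eq_mul, one_mul,
      add_eq_left, mul_eq_zero, inv_eq_zero, hΛ.ne', false_or] at h
    unfold inflow
    linarith
  have hsummable : Summable w := summable_of_sum_le hw0 hw1
  have htot : 0 < ∑' m, w m := hwF.trans_le (hsummable.sum_le_tsum _ fun m _ => hw0 m)
  refine ⟨fun m => (∑' m, w m)⁻¹ * w m, fun m => mul_nonneg (inv_nonneg.2 htot.le) (hw0 m), ?_, ?_⟩
  · have := hsummable.hasSum.mul_left (∑' m, w m)⁻¹
    rwa [inv_mul_cancel₀ htot.ne'] at this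
  · intro m
    have := hwbal m
    simp only [inflow] at this ⊢
    rw [mul_assoc, this]
    ring

/-- Drift of the quadratic function `α m₁² + 2 β m₁ m₂ + γ m₂²`. -/
lemma generator_quadratic_le {a b la1 la2 q1 q2 α β γ : ℝ} (ha : 0 < a) (hb : 0 < b)
    (hla1 : 0 < la1) (hla2 : 0 < la2) (hq1 : 0 ≤ q1) (hq2 : 0 ≤ q2)
    (hα : 0 ≤ α) (hγ : 0 ≤ γ)
    (h1 : α * (a - la1) + β * (b - la2) < 0) (h2 : β * (a - la1) + γ * (b - la2) < 0)
    (h3 : β * a + γ * (b - la2 - q1) < 0) (h4 : α * (a - la1 - q2) + β * b < 0) :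
    ∃ ε K : ℝ, 0 < ε ∧ 0 ≤ K ∧ ∀ m : ℕ × ℕ,
      generator a b (fun n => la1 + q2 * (if n = 0 then 1 else 0))
        (fun n => la2 + q1 * (if n = 0 then 1 else 0))
        (fun m => α * (m.1 : ℝ) ^ 2 + 2 * β * m.1 * m.2 + γ * (m.2 : ℝ) ^ 2) m
      ≤ K - ε * ((m.1 : ℝ) + m.2) := by
  obtain ⟨ε, hε, e1, e2, e3, e4⟩ : ∃ ε : ℝ, 0 < ε ∧ α * (a - la1) + β * (b - la2) ≤ -ε ∧
      β * (a - la1) + γ * (b - la2) ≤ -ε ∧ β * a + γ * (b - la2 - q1) ≤ -ε ∧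
      α * (a - la1 - q2) + β * b ≤ -ε := by
    refine ⟨min (min (-(α * (a - la1) + β * (b - la2))) (-(β * (a - la1) + γ * (b - la2))))
      (min (-(β * a + γ * (b - la2 - q1))) (-(α * (a - la1 - q2) + β * b))), ?_, ?_, ?_, ?_, ?_⟩
    · simp only [lt_min_iff]
      refine ⟨⟨?_, ?_⟩, ?_, ?_⟩ <;> linarith
    · exact le_neg.1 ((min_le_left _ _).trans (min_le_left _ _))
    · exact le_neg.1 ((min_le_left _ _).trans (min_le_right _ _))
    · exact le_neg.1 ((min_le_right _ _).trans (min_le_left _ _))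
    · exact le_neg.1 ((min_le_right _ _).trans (min_le_right _ _))
  refine ⟨2 * ε, α * (a + la1 + q2) + γ * (b + la2 + q1), by positivity, by positivity, ?_⟩
  have c1 := mul_nonneg hα hq2
  have c2 := mul_nonneg hγ hq1
  have c3 := mul_nonneg hα hla1.le
  have c4 := mul_nonneg hγ hla2.le
  rintro ⟨_ | i, _ | j⟩
  · simp only [generator_apply]
    norm_num
    linarith
  · simp only [generator_apply]
    have hj : (0 : ℝ) ≤ (j : ℝ) + 1 := by positivity
    have := mul_le_mul_of_nonneg_right e3 hj
    norm_num
    linarith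
  · simp only [generator_apply]
    have hi : (0 : ℝ) ≤ (i : ℝ) + 1 := by positivity
    have := mul_le_mul_of_nonneg_right e4 hi
    norm_num
    linarith
  · simp only [generator_apply]
    have hi : (0 : ℝ) ≤ (i : ℝ) + 1 := by positivity
    have hj : (0 : ℝ) ≤ (j : ℝ) + 1 := by positivity
    have := mul_le_mul_of_nonneg_right e1 hi
    have := mul_le_mul_of_nonneg_right e2 hj
    norm_num
    linarith

/-- In each of the three stability regimes a suitable quadratic Lyapunov function exists. -/
lemma exists_quadratic_coeffs {a b la1 la2 p1 p2 : ℝ} (ha : 0 < a) (hb : 0 < b)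
    (hla1 : 0 < la1) (hla2 : 0 < la2) (hp1 : 0 ≤ p1) (hp2 : 0 ≤ p2)
    (hcond : (la2 < b ∧ a * p1 + b < la1 * p1 + la2)
      ∨ (la1 < a ∧ a + b * p2 < la1 + la2 * p2) ∨ (a < la1 ∧ b < la2)) :
    ∃ α β γ : ℝ, 0 ≤ α ∧ 0 ≤ β ∧ 0 ≤ γ ∧
      α * (a - la1) + β * (b - la2) < 0 ∧ β * (a - la1) + γ * (b - la2) < 0 ∧
      β * a + γ * (b - la2 - p1 * la1) < 0 ∧ α * (a - la1 - p2 * la2) + β * b < 0 := by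
  have hp1la := mul_nonneg hp1 hla1.le
  have hp2la := mul_nonneg hp2 hla2.le
  rcases hcond with ⟨h1, h2⟩ | ⟨h1, h2⟩ | ⟨h1, h2⟩
  · have hδ : 0 < la1 - a := by
      by_contra h
      nlinarith [mul_nonneg hp1 (sub_nonneg.2 (sub_nonpos.1 (not_lt.1 h)))]
    have hα : 0 < (p1 * b + 1) / (la1 - a) := by positivity
    have hmul : (p1 * b + 1) / (la1 - a) * (la1 - a) = p1 * b + 1 := div_mul_cancel₀ _ hδ.ne'
    refine ⟨(p1 * b + 1) / (la1 - a), p1, 1, hα.le, hp1, zero_le_one, ?_, ?_, ?_, ?_⟩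
    · nlinarith
    · nlinarith
    · nlinarith
    · nlinarith [mul_nonneg hα.le hp2la]
  · have hδ : 0 < la2 - b := by
      by_contra h
      nlinarith [mul_nonneg hp2 (sub_nonneg.2 (sub_nonpos.1 (not_lt.1 h)))]
    have hγ : 0 < (p2 * a + 1) / (la2 - b) := by positivity
    have hmul : (p2 * a + 1) / (la2 - b) * (la2 - b) = p2 * a + 1 := div_mul_cancel₀ _ hδ.ne'
    refine ⟨1, p2, (p2 * a + 1) / (la2 - b), zero_le_one, hp2, hγ.le, ?_, ?_, ?_, ?_⟩
    · nlinarith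
    · nlinarith
    · nlinarith [mul_nonneg hγ.le hp1la]
    · nlinarith
  · refine ⟨1, 0, 1, zero_le_one, le_rfl, zero_le_one, ?_, ?_, ?_, ?_⟩ <;> linarith

end

theorem stmt18 (la1 la2 mu1 mu2 p1 p2 l1 l2 : ℝ)
    (hla1 : 0 < la1) (hla2 : 0 < la2) (hmu1 : 0 < mu1) (hmu2 : 0 < mu2)
    (hp1 : 0 ≤ p1) (hp1' : p1 ≤ 1) (hp2 : 0 ≤ p2) (hp2' : p2 ≤ 1)
    (hl1 : 0 < l1) (hl2 : 0 < l2)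
    (hcond : (la2 < mu2 * l2 ∧ mu1 * l1 * p1 + mu2 * l2 < la1 * p1 + la2)
      ∨ (la1 < mu1 * l1 ∧ mu1 * l1 + mu2 * l2 * p2 < la1 + la2 * p2)
      ∨ (mu1 * l1 < la1 ∧ mu2 * l2 < la2)) :
    ∃! π : ℕ × ℕ → ℝ, IsInvariantDist la1 la2 mu1 mu2 l1 l2 p1 p2 π := by
  have ha := mul_pos hmu1 hl1
  have hb := mul_pos hmu2 hl2
  have hq1 := mul_nonneg hp1 hla1.le
  have hq2 := mul_nonneg hp2 hla2.le
  obtain ⟨α, β, γ, hα, hβ, hγ, h1, h2, h3, h4⟩ :=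
    exists_quadratic_coeffs ha hb hla1 hla2 hp1 hp2 hcond
  obtain ⟨ε, K, hε, hK, hdrift⟩ :=
    generator_quadratic_le ha hb hla1 hla2 hq1 hq2 hα hγ h1 h2 h3 h4
  set r : ℕ → ℝ := fun n => la1 + p2 * la2 * (if n = 0 then 1 else 0)
  set s : ℕ → ℝ := fun n => la2 + p1 * la1 * (if n = 0 then 1 else 0)
  have hr : ∀ n, 0 < r n := fun n => by simp only [r]; split_ifs <;> linarith
  have hs : ∀ n, 0 < s n := fun n => by simp only [s]; split_ifs <;> linarith
  have hrR : ∀ n, r n ≤ la1 + p2 * la2 + (la2 + p1 * la1) := fun n => by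
    simp only [r]; split_ifs <;> linarith
  have hsR : ∀ n, s n ≤ la1 + p2 * la2 + (la2 + p1 * la1) := fun n => by
    simp only [s]; split_ifs <;> linarith
  obtain ⟨π, hπ0, hπ1, hπ⟩ := exists_balance_of_drift ha hb hr hs hrR hsR _
    (fun m => by simp only [Pi.zero_apply]; positivity) hε hK hdrift
  refine ⟨π, ⟨hπ0, hπ1.tsum_eq, fun i j => hπ (i, j)⟩, ?_⟩
  rintro ρ ⟨-, hρ1, hρ⟩
  have hρsum : HasSum ρ 1 := by
    have : Summable ρ := by
      by_contra h
      rw [tsum_eq_zero_of_not_summable h] at hρ1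
      exact zero_ne_one hρ1
    exact hρ1 ▸ this.hasSum
  have hρbal : ∀ m, ρ m * outRate (mu1 * l1) (mu2 * l2) r s m
      = inflow (mu1 * l1) (mu2 * l2) r s ρ m := fun m => hρ m.1 m.2
  ext m
  exact le_antisymm (le_of_balance ha hb hr hs hrR hsR hρsum hπ1 hρbal hπ m)
    (le_of_balance ha hb hr hs hrR hsR hπ1 hρsum hπ hρbal m)
end
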